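/- arXiv:1809.01767 — 3 statements merged into one kernel-verified Lean document; each statement's English description precedes it below -/
import Mathlib

section
/- Let p be a prime and let k and l be positive integers with k > l and k ≥ 3, and suppose p does not divide k − l. If A is a (k,l)-sum-free subset of Z_p of maximum size ⌈(p−1)/(k+l)⌉, then A is an arithmetic progression in Z_p. -/
/-!
Suppose `A` is `(k,l)`-sum-free of size `m = ⌈(p - 1) / (k + l)⌉` but not an arithmetic progression.
Sets with at most two elements are progressions, so `m ≥ 3`.

*Isoperimetry.* Call `X` tight for `A` if it attains equality in the current lower bound for
`#(X + A)`. By submodularity of `X ↦ #(X + A)`, a smallest tight set meets each of its nontrivial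
translates in at most one element, and comparison with the lower bound makes it small. Starting from
Cauchy–Davenport this gives Vosper's bound `#(X + A) ≥ #X + #A` (`sumGap_one`); starting from
Vosper's bound it gives tight sets with two or three elements (`exists_small_tight`).

*Extremal structure* (`extremal_structure`). Since `0 ∉ kA - lA`, the sets `iA - jA` and
`-((k - i)A - (l - j)A)` are disjoint. Vosper's bound gives each mixed sumset `iA - jA` that leaves
out at least two elements at least `(i + j)m` elements; as `p` is prime, `p = (k + l)m + 1`, so only
one unit of slack remains. The cardinality of `A - A` is odd, hence equal to `2m + 1`, which uses up
the slack. If `l ≥ 2`, the set `(k - 1)A - (l - 1)A` contains another copy of `A - A` and would need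
a second unit, a contradiction. So `l = 1`, `#(2A) = 2m`, the set `(k - 1)A` is the complement of
`A - A`, and `kA = A + (k - 1)A` is the complement of `A`.

*Contradiction for `m ≥ 4`* (`false_of_four_le_card`). Now `A` is tight for itself, so some tight set
`M` has two or three elements. If `M` has two, then `A` consists of two runs of a common difference;
describing the complement of `A` by `A` and `A - A` then forces `A` to be symmetric, so that
`#(2A) = #(A - A)`, or makes `A - A` too large (`no_two_runs`). If `M` has three, it is similar to
`{0, 2, 3}`, and then a long gap in `A` propagates around all of `ZMod p` (`no_tight_triple`).

*Contradiction for `m = 3`* (`false_of_card_eq_three`). For `k ≥ 4`, `#(3A) ≤ 9` forces `A` to be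
similar to `{0, 2, 3}`, so `#(kA) ≤ 3k`, which is too small. For `k = 3` the prime is `13`.
-/

open Finset Pointwise

/-- The `h`-fold sumset of a finite set `A`: all sums of `h` not-necessarily-distinct
elements of `A` (with the convention that the `0`-fold sumset is `{0}`). -/
def foldSum {G : Type*} [AddCommMonoid G] [DecidableEq G] : ℕ → Finset G → Finset G
  | 0, _ => {0}
  | n + 1, A => A + foldSum n A

/-- `A` is `(k,l)`-sum-free if the `k`-fold and `l`-fold sumsets of `A` are disjoint. -/
def KLSumFree {G : Type*} [AddCommMonoid G] [DecidableEq G] (k l : ℕ) (A : Finset G) : Prop :=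
  Disjoint (foldSum k A) (foldSum l A)

/-- `mu G k l` is the maximum size of a `(k,l)`-sum-free subset of `G`. -/
noncomputable def mu (G : Type*) [AddCommMonoid G] [DecidableEq G] (k l : ℕ) : ℕ :=
  sSup {m | ∃ A : Finset G, KLSumFree k l A ∧ A.card = m}

/-- Ceiling division: `cdiv a b = ⌈a / b⌉` for `b > 0`. -/
def cdiv (a b : ℕ) : ℕ := (a + b - 1) / b

/-- The arithmetic progression `{a, a+b, ..., a+(m-1)b}` in `ZMod d`. -/
def apSet (d : ℕ) (a b : ZMod d) (m : ℕ) : Finset (ZMod d) :=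
  (Finset.range m).image (fun i => a + i • b)

/-- Maximum size of a `(k,l)`-sum-free arithmetic progression in `ZMod d`. -/
noncomputable def alphaZ (d k l : ℕ) : ℕ :=
  sSup {m | ∃ a b : ZMod d, (apSet d a b m).card = m ∧ KLSumFree k l (apSet d a b m)}

/-- Maximum size of a `(k,l)`-sum-free arithmetic progression in `ZMod d` whose common
difference is relatively prime to `d`. -/
noncomputable def gammaZ (d k l : ℕ) : ℕ :=
  sSup {m | ∃ a b : ZMod d, Nat.gcd (ZMod.val b) d = 1 ∧
    (apSet d a b m).card = m ∧ KLSumFree k l (apSet d a b m)}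

/-! ### Tight sets and Vosper's bound -/

/-- A nonempty set closed under a nonzero shift is all of `ZMod p`. -/
lemma closed_eq_univ {p : ℕ} [Fact p.Prime] {S : Finset (ZMod p)} {d : ZMod p} (hd : d ≠ 0)
    (hS : S.Nonempty) (h : ∀ x ∈ S, x + d ∈ S) : S = univ := by
  obtain ⟨x, hx⟩ := hS
  have key : ∀ n : ℕ, x + n * d ∈ S := by
    intro n
    induction n with
    | zero => simpa using hx
    | succ n ih =>
      have := h _ ih
      push_cast
      convert this using 1
      ring
  refine Finset.eq_univ_iff_forall.2 fun y => ?_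
  have := key ((y - x) / d).val
  rw [ZMod.natCast_zmod_val, div_mul_cancel₀ _ hd] at this
  simpa using this

lemma mem_tr {p : ℕ} {A : Finset (ZMod p)} {d x : ZMod p} : x ∈ d +ᵥ A ↔ x - d ∈ A := by
  rw [Finset.mem_vadd_finset]
  constructor
  · rintro ⟨y, hy, rfl⟩
    simpa using hy
  · intro h
    exact ⟨x - d, h, by simp⟩

lemma card_inter_add_card_union_tr {p : ℕ} (A : Finset (ZMod p)) (d : ZMod p) :
    #(A ∩ (d +ᵥ A)) + #(A ∪ (d +ᵥ A)) = 2 * #A := by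
  have := Finset.card_inter_add_card_union A (d +ᵥ A)
  rw [Finset.card_vadd_finset] at this
  omega

lemma card_le_add_right {p : ℕ} {A X : Finset (ZMod p)} (hA : A.Nonempty) : #X ≤ #(X + A) :=
  Finset.card_le_card_add_right hA

/-- `SumGap A t`: adding `A` to a set `X` with at least two elements either fills all but at most
one element of `ZMod p`, or gains at least `#A + t - 1` elements. For `t = 0` this is the
Cauchy–Davenport bound, for `t = 1` Vosper's improvement of it. -/
def SumGap {p : ℕ} (A : Finset (ZMod p)) (t : ℕ) : Prop :=
  ∀ X : Finset (ZMod p), 2 ≤ #X → #(X + A) + 2 ≤ p → #X + #A + t ≤ #(X + A) + 1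

/-- `Tight A t X`: the set `X` attains equality in `SumGap A t`
(a 2-fragment in the isoperimetric method). -/
def Tight {p : ℕ} (A : Finset (ZMod p)) (t : ℕ) (X : Finset (ZMod p)) : Prop :=
  2 ≤ #X ∧ #(X + A) + 2 ≤ p ∧ #(X + A) + 1 = #X + #A + t

/-- The negated complement of `X + A` is tight whenever `X` is. -/
lemma Tight.dual {p : ℕ} [Fact p.Prime] {A X : Finset (ZMod p)} {t : ℕ}
    (H : SumGap A t) (h : Tight A t X) :
    Tight A t (-(X + A)ᶜ) ∧ #(-(X + A)ᶜ) + #(X + A) = p := by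
  obtain ⟨h1, h2, h3⟩ := h
  have hc : #(-(X + A)ᶜ) + #(X + A) = p := by
    rw [Finset.card_neg, add_comm, Finset.card_add_card_compl, ZMod.card]
  have hsub : -(X + A)ᶜ + A ⊆ -(Xᶜ) := by
    intro x hx
    obtain ⟨y, hy, a, ha, rfl⟩ := Finset.mem_add.1 hx
    rw [Finset.mem_neg', Finset.mem_compl] at hy ⊢
    intro hX
    apply hy
    rw [Finset.mem_add]
    exact ⟨_, hX, a, ha, by ring⟩
  have hle := Finset.card_le_card hsub
  have hX : #(-(Xᶜ)) + #X = p := by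
    rw [Finset.card_neg, add_comm, Finset.card_add_card_compl, ZMod.card]
  have := H (-(X + A)ᶜ) (by omega) (by omega)
  exact ⟨⟨by omega, by omega, by omega⟩, hc⟩

/-- A tight set of least size meets each of its nontrivial translates in at most one element:
by submodularity the intersection would otherwise be a smaller tight set. -/
lemma exists_sidon_tight {p : ℕ} [Fact p.Prime] {A X : Finset (ZMod p)} {t : ℕ}
    (hA : A.Nonempty) (H : SumGap A t) (hX : Tight A t X) :
    ∃ M, Tight A t M ∧ ∀ e : ZMod p, e ≠ 0 → #(M ∩ (e +ᵥ M)) ≤ 1 := by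
  classical
  obtain ⟨M, hM, hmin⟩ := Finset.exists_min_image (univ.filter (Tight A t)) Finset.card
    ⟨X, by simpa using hX⟩
  simp only [Finset.mem_filter, Finset.mem_univ, true_and] at hM hmin
  refine ⟨M, hM, fun e he => ?_⟩
  by_contra! hI
  obtain ⟨hd, hdc⟩ := hM.dual H
  have hdm := hmin _ hd
  obtain ⟨h1, h2, h3⟩ := hM
  have hMA : #M ≤ #(M + A) := card_le_add_right hA
  have hne : M ∩ (e +ᵥ M) ≠ M := by
    intro h
    have hu : M = univ := by
      refine closed_eq_univ (neg_ne_zero.2 he) (Finset.card_pos.1 (by omega)) fun x hx => ?_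
      rw [← h, Finset.mem_inter, mem_tr] at hx
      simpa [sub_eq_add_neg] using hx.2
    rw [hu, Finset.card_univ, ZMod.card] at hMA
    rw [hu] at h2
    omega
  have hlt : #(M ∩ (e +ᵥ M)) < #M :=
    Finset.card_lt_card (Finset.inter_subset_left.ssubset_of_ne hne)
  have hIA : #(M ∩ (e +ᵥ M) + A) ≤ #(M + A) :=
    Finset.card_le_card (Finset.add_subset_add_right Finset.inter_subset_left)
  have hIg := H _ hI (by omega)
  have hIs : ¬ Tight A t (M ∩ (e +ᵥ M)) := fun h => by
    have := hmin _ h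
    omega
  have hIs' : #(M ∩ (e +ᵥ M) + A) + 1 ≠ #(M ∩ (e +ᵥ M)) + #A + t := fun h =>
    hIs ⟨hI, by omega, h⟩
  have hU := card_inter_add_card_union_tr M e
  have hUA : #((M ∪ (e +ᵥ M)) + A) + #(M ∩ (e +ᵥ M) + A) ≤ 2 * #(M + A) := by
    have hv : (e +ᵥ M) + A = e +ᵥ (M + A) := vadd_add_assoc e M A
    rw [Finset.union_add, hv]
    rw [← card_inter_add_card_union_tr (M + A) e, add_comm]
    gcongr
    exact (Finset.inter_add_subset).trans (by rw [hv])
  have := H (M ∪ (e +ᵥ M)) (by omega) (by omega)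
  omega

/-- A set meeting its translates in at most one element grows quickly. -/
lemma three_mul_card_le {p : ℕ} [Fact p.Prime] {M B : Finset (ZMod p)}
    (hM : ∀ e : ZMod p, e ≠ 0 → #(M ∩ (e +ᵥ M)) ≤ 1) (hB : 3 ≤ #B) : 3 * #M ≤ #(M + B) + 3 := by
  obtain ⟨C, hCB, hC⟩ := Finset.exists_subset_card_eq hB
  obtain ⟨a, b, c, hab, hac, hbc, rfl⟩ := Finset.card_eq_three.1 hC
  have hint : ∀ x y : ZMod p, x ≠ y → #((x +ᵥ M) ∩ (y +ᵥ M)) ≤ 1 := by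
    intro x y hxy
    have : (x +ᵥ M) ∩ (y +ᵥ M) = x +ᵥ (M ∩ ((y - x) +ᵥ M)) := by
      ext z
      simp only [Finset.mem_inter, mem_tr]
      rw [show z - x - (y - x) = z - y by ring]
    rw [this, Finset.card_vadd_finset]
    exact hM _ (sub_ne_zero.2 hxy.symm)
  have hsub : (a +ᵥ M) ∪ (b +ᵥ M) ∪ (c +ᵥ M) ⊆ M + B := by
    intro z hz
    simp only [Finset.mem_union, mem_tr] at hz
    rw [Finset.mem_add]
    rcases hz with (hz | hz) | hz
    · exact ⟨_, hz, a, hCB (by simp), by ring⟩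
    · exact ⟨_, hz, b, hCB (by simp), by ring⟩
    · exact ⟨_, hz, c, hCB (by simp), by ring⟩
  have h1 := Finset.card_le_card hsub
  have h2 := Finset.card_union_add_card_inter ((a +ᵥ M) ∪ (b +ᵥ M)) (c +ᵥ M)
  have h3 := Finset.card_union_add_card_inter (a +ᵥ M) (b +ᵥ M)
  have h4 := hint a b hab
  have h5 := hint a c hac
  have h6 := hint b c hbc
  have h7 : #(((a +ᵥ M) ∪ (b +ᵥ M)) ∩ (c +ᵥ M)) ≤
      #((a +ᵥ M) ∩ (c +ᵥ M)) + #((b +ᵥ M) ∩ (c +ᵥ M)) := by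
    rw [Finset.union_inter_distrib_right]
    exact Finset.card_union_le _ _
  simp only [Finset.card_vadd_finset] at h2 h3
  omega

lemma add_pair {p : ℕ} (A : Finset (ZMod p)) (x y : ZMod p) :
    A + {x, y} = x +ᵥ (A ∪ ((y - x) +ᵥ A)) := by
  ext z
  simp only [Finset.mem_add, mem_tr, Finset.mem_union, Finset.mem_insert, Finset.mem_singleton]
  rw [show z - x - (y - x) = z - y by ring]
  constructor
  · rintro ⟨a, ha, b, rfl | rfl, rfl⟩
    · left; simpa using ha
    · right; simpa using ha
  · rintro (h | h)
    · exact ⟨_, h, x, by simp, by ring⟩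
    · exact ⟨_, h, y, by simp, by ring⟩

lemma card_add_pair {p : ℕ} (A : Finset (ZMod p)) (x y : ZMod p) :
    #(A + {x, y}) + #(A ∩ ((y - x) +ᵥ A)) = 2 * #A := by
  rw [add_pair, Finset.card_vadd_finset, add_comm, card_inter_add_card_union_tr]

/-- A two-element tight set yields a translate of `A` overlapping `A` almost entirely. -/
lemma Tight.exists_of_card_two {p : ℕ} {A M : Finset (ZMod p)} {t : ℕ} (h : Tight A t M)
    (h2 : #M = 2) : ∃ d : ZMod p, d ≠ 0 ∧ #(A ∩ (d +ᵥ A)) + t + 1 = #A := by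
  obtain ⟨x, y, hxy, rfl⟩ := Finset.card_eq_two.1 h2
  refine ⟨y - x, sub_ne_zero.2 hxy.symm, ?_⟩
  have := card_add_pair A x y
  have h3 := h.2.2
  rw [add_comm {x, y} A] at h3
  omega

lemma sumGap_zero {p : ℕ} [Fact p.Prime] {A : Finset (ZMod p)} (hA : A.Nonempty) :
    SumGap A 0 := by
  intro X hX h2
  have := ZMod.cauchy_davenport (p := p) Fact.out (s := X) (t := A)
    (Finset.card_pos.1 (by omega)) hA
  omega

/-- A form of Vosper's theorem: unless some nontrivial translate of `A` misses at most one
element of `A`, the Cauchy–Davenport bound improves by one. -/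
lemma sumGap_one {p : ℕ} [Fact p.Prime] {A : Finset (ZMod p)} (hA : A.Nonempty)
    (h : ∀ d : ZMod p, d ≠ 0 → #(A ∩ (d +ᵥ A)) + 2 ≤ #A) : SumGap A 1 := by
  intro X hX h2
  by_contra! hlt
  have h0 := sumGap_zero hA X hX h2
  obtain ⟨M, hM, hMs⟩ := exists_sidon_tight hA (sumGap_zero hA) (X := X) ⟨hX, h2, by omega⟩
  by_cases hM2 : #M = 2
  · obtain ⟨d, hd, h'⟩ := hM.exists_of_card_two hM2
    have := h d hd
    omega
  have hM3 : 3 ≤ #M := by have := hM.1; omega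
  have hMn : M.Nonempty := Finset.card_pos.1 (by omega)
  have hA2 : 2 ≤ #A := by have := h 1 one_ne_zero; omega
  have hT : Tight M 0 A := by
    obtain ⟨a, b, c⟩ := hM
    rw [add_comm M A] at b c
    exact ⟨hA2, b, by omega⟩
  obtain ⟨N, hN, hNs⟩ := exists_sidon_tight hMn (sumGap_zero hMn) hT
  by_cases hN2 : #N = 2
  · obtain ⟨d, hd, h'⟩ := hN.exists_of_card_two hN2
    have := hMs d hd
    omega
  have hN3 : 3 ≤ #N := by have := hN.1; omega
  have e1 := three_mul_card_le hMs hN3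
  have e2 := three_mul_card_le hNs hM3
  rw [add_comm M N] at e1
  have := hN.2.2
  omega

/-- The next case after Vosper: minimal tight sets for `t = 1` have at most three elements. -/
lemma exists_small_tight {p : ℕ} [Fact p.Prime] {A X : Finset (ZMod p)} (hA : A.Nonempty)
    (h : ∀ d : ZMod p, d ≠ 0 → #(A ∩ (d +ᵥ A)) + 2 ≤ #A) (hX : Tight A 1 X) :
    ∃ M, Tight A 1 M ∧ #M ≤ 3 ∧ ∀ e : ZMod p, e ≠ 0 → #(M ∩ (e +ᵥ M)) ≤ 1 := by
  obtain ⟨M, hM, hMs⟩ := exists_sidon_tight hA (sumGap_one hA h) hX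
  refine ⟨M, hM, ?_, hMs⟩
  by_contra! hM4
  have hMn : M.Nonempty := Finset.card_pos.1 (by omega)
  have hA2 : 2 ≤ #A := by have := h 1 one_ne_zero; omega
  have hT : Tight M 1 A := by
    obtain ⟨a, b, c⟩ := hM
    rw [add_comm M A] at b c
    exact ⟨hA2, b, by omega⟩
  have hMh : ∀ d : ZMod p, d ≠ 0 → #(M ∩ (d +ᵥ M)) + 2 ≤ #M := fun d hd => by
    have := hMs d hd
    omega
  obtain ⟨N, hN, hNs⟩ := exists_sidon_tight hMn (sumGap_one hMn hMh) hT
  by_cases hN2 : #N = 2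
  · obtain ⟨d, hd, h'⟩ := hN.exists_of_card_two hN2
    have := hMs d hd
    omega
  have hN3 : 3 ≤ #N := by have := hN.1; omega
  have e1 := three_mul_card_le hMs hN3
  have e2 := three_mul_card_le (B := M) hNs (by omega)
  rw [add_comm M N] at e1
  have := hN.2.2
  omega

/-! ### Sets with one or two runs -/

lemma exists_notMem_run {p : ℕ} [Fact p.Prime] {A : Finset (ZMod p)} {d : ZMod p} (hd : d ≠ 0)
    (hA : A ≠ univ) (a : ZMod p) : ∃ n : ℕ, a + n * d ∉ A := by
  by_contra! h
  apply hA
  refine Finset.eq_univ_iff_forall.2 fun y => ?_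
  have := h ((y - a) / d).val
  rw [ZMod.natCast_zmod_val, div_mul_cancel₀ _ hd] at this
  simpa using this

/-- The maximal run of difference `d` in `A` starting at `a`; its terms are distinct because a
repetition would make the run periodic, and so keep it from ever leaving `A`. -/
lemma exists_run {p : ℕ} [Fact p.Prime] {A : Finset (ZMod p)} {d : ZMod p} (hd : d ≠ 0)
    (hA : A ≠ univ) {a : ZMod p} (ha : a ∈ A) :
    ∃ i : ℕ, 1 ≤ i ∧ (∀ t < i, a + t * d ∈ A) ∧ a + i * d ∉ A ∧
      Set.InjOn (fun t : ℕ => a + t * d) (Finset.range i) := by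
  classical
  have hex := exists_notMem_run hd hA a
  have hlt : ∀ t < Nat.find hex, a + t * d ∈ A := fun t ht => not_not.1 (Nat.find_min hex ht)
  refine ⟨Nat.find hex, ?_, hlt, Nat.find_spec hex, ?_⟩
  · rw [Nat.one_le_iff_ne_zero]
    intro h
    have := Nat.find_spec hex
    rw [h] at this
    simp [ha] at this
  · have aux : ∀ s t : ℕ, s < t → t < Nat.find hex → a + s * d ≠ a + t * d := by
      intro s t hst ht he
      apply Nat.find_spec hex
      have h1 := hlt (Nat.find hex - (t - s)) (by omega)
      convert h1 using 1
      rw [Nat.cast_sub (by omega), Nat.cast_sub hst.le]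
      linear_combination -he
    intro s hs t ht he
    simp only [Finset.coe_range, Set.mem_Iio] at hs ht
    rcases lt_trichotomy s t with h | h | h
    · exact absurd he (aux s t h ht)
    · exact h
    · exact absurd he.symm (aux t s h hs)

lemma exists_start {p : ℕ} [Fact p.Prime] {A : Finset (ZMod p)} {d : ZMod p} (hd : d ≠ 0)
    (hA : A ≠ univ) {x : ZMod p} (hx : x ∈ A) :
    ∃ a ∈ A \ (d +ᵥ A), ∃ t : ℕ, x = a + t * d ∧ ∀ s ≤ t, a + s * d ∈ A := by
  classical
  have hex : ∃ n : ℕ, x + n * (-d) ∉ A := exists_notMem_run (neg_ne_zero.2 hd) hA x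
  obtain ⟨n, hn⟩ : ∃ n, Nat.find hex = n + 1 := by
    refine Nat.exists_eq_succ_of_ne_zero fun h => ?_
    have := Nat.find_spec hex
    rw [h] at this
    simp [hx] at this
  have hlt : ∀ t ≤ n, x + t * (-d) ∈ A := fun t ht =>
    not_not.1 (Nat.find_min hex (m := t) (by omega))
  have hsp := Nat.find_spec hex
  rw [hn] at hsp
  refine ⟨x + n * (-d), ?_, n, by ring, fun s hs => ?_⟩
  · rw [Finset.mem_sdiff, mem_tr]
    refine ⟨hlt n le_rfl, ?_⟩
    convert hsp using 2
    push_cast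
    ring
  · have := hlt (n - s) (by omega)
    convert this using 1
    rw [Nat.cast_sub hs]
    ring

/-- A set covered by one run is an arithmetic progression. -/
lemma eq_apSet {p : ℕ} [Fact p.Prime] {A : Finset (ZMod p)} {d : ZMod p} (hd : d ≠ 0)
    (hA : A ≠ univ) (hne : A.Nonempty) (h : #A ≤ #(A ∩ (d +ᵥ A)) + 1) :
    ∃ a b : ZMod p, A = apSet p a b #A := by
  have hL : #(A \ (d +ᵥ A)) ≤ 1 := by
    have := Finset.card_sdiff_add_card_inter A (d +ᵥ A)
    omega
  obtain ⟨x, hx⟩ := hne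
  obtain ⟨a, ha, -⟩ := exists_start hd hA hx
  obtain ⟨i, -, hi, hi', hinj⟩ := exists_run hd hA (Finset.mem_sdiff.1 ha).1
  have hAi : A = apSet p a d i := by
    ext y
    simp only [apSet, Finset.mem_image, Finset.mem_range, nsmul_eq_mul]
    constructor
    · intro hy
      obtain ⟨a', ha', t, rfl, ht⟩ := exists_start hd hA hy
      obtain rfl : a' = a := Finset.card_le_one.1 hL _ ha' _ ha
      refine ⟨t, ?_, rfl⟩
      by_contra! hti
      exact hi' (ht i hti)
    · rintro ⟨t, ht, rfl⟩
      exact hi t ht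
  have hc : #A = i := by
    conv_lhs => rw [hAi]
    rw [apSet, Finset.card_image_of_injOn, Finset.card_range]
    simpa only [nsmul_eq_mul] using hinj
  exact ⟨a, d, by rw [hc]; exact hAi⟩

lemma card_add_eq_card_sub_of_symm {p : ℕ} {A : Finset (ZMod p)} (c : ZMod p)
    (h : ∀ x ∈ A, c - x ∈ A) : #(A + A) = #(A - A) := by
  have : A + A = c +ᵥ (A - A) := by
    ext x
    rw [mem_tr, Finset.mem_add, Finset.mem_sub]
    constructor
    · rintro ⟨y, hy, z, hz, rfl⟩
      exact ⟨y, hy, c - z, h z hz, by ring⟩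
    · rintro ⟨y, hy, z, hz, hx⟩
      exact ⟨y, hy, c - z, h z hz, by linear_combination hx⟩
  rw [this, Finset.card_vadd_finset]

lemma intCast_mul_injOn {p : ℕ} [Fact p.Prime] {d : ZMod p} (hd : d ≠ 0) (c : ZMod p) {u v : ℤ}
    (huv : v - u < p) : Set.InjOn (fun s : ℤ => c + s * d) (Finset.Icc u v) := by
  intro s hs t ht he
  simp only [Finset.coe_Icc, Set.mem_Icc] at hs ht
  have h1 : (s : ZMod p) = t := mul_right_cancel₀ hd (add_left_cancel he)
  rw [ZMod.intCast_eq_intCast_iff_dvd_sub] at h1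
  have := Int.eq_zero_of_abs_lt_dvd h1 (by rw [abs_lt]; omega)
  omega

/-- The heart of the two-run case. Let `A` be the union of a run `I` of length `i` at `a` and a
strictly shorter run `J` of length `j` at `b`. The covering hypothesis at the two neighbours of `J`
forces `J - I` to be a maximal run of `A - A`. Hence `J - I` is disjoint from `I - I`, and either
coincides with its negative, making `A` symmetric, or is disjoint from it, making `A - A` too
large. -/
lemma two_runs_aux {p : ℕ} [Fact p.Prime] {A : Finset (ZMod p)} (hm : 4 ≤ #A)
    (hp : 2 * #A + 1 ≤ p) (hE : #(A - A) ≤ 2 * #A + 1) (hne : #(A + A) ≠ #(A - A))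
    (hcov : ∀ x ∉ A, ∃ a ∈ A, x - a ∉ A - A) {d : ZMod p} (hd : d ≠ 0) {a b : ZMod p} {i j : ℕ}
    (hI : ∀ t < i, a + t * d ∈ A) (hJ : ∀ t < j, b + t * d ∈ A)
    (hA : ∀ x ∈ A, (∃ t < i, x = a + t * d) ∨ (∃ t < j, x = b + t * d))
    (hb : b - d ∉ A) (hbj : b + j * d ∉ A) (hj : 1 ≤ j) (hij : j < i) (him : i ≤ #A)
    (hijm : #A ≤ i + j) : False := by
  -- `J - I`, `I - J` and `I - I` as runs in `A - A`
  have hR : ∀ s : ℤ, -(i : ℤ) < s → s < j → b - a + s * d ∈ A - A := by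
    intro s hs1 hs2
    rcases le_total 0 s with h | h
    · lift s to ℕ using h
      refine Finset.mem_sub.2 ⟨_, hJ s (by omega), _, hI 0 (by omega), ?_⟩
      push_cast
      ring
    · obtain ⟨n, rfl⟩ : ∃ n : ℕ, s = -n := ⟨s.natAbs, by omega⟩
      refine Finset.mem_sub.2 ⟨_, hJ 0 (by omega), _, hI n (by omega), ?_⟩
      push_cast
      ring
  have hneg : ∀ x, x ∈ A - A → -x ∈ A - A := by
    intro x hx
    obtain ⟨y, hy, z, hz, rfl⟩ := Finset.mem_sub.1 hx
    exact Finset.mem_sub.2 ⟨z, hz, y, hy, by ring⟩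
  have hR' : ∀ s : ℤ, -(j : ℤ) < s → s < i → a - b + s * d ∈ A - A := by
    intro s hs1 hs2
    have := hneg _ (hR (-s) (by omega) (by omega))
    convert this using 1
    push_cast
    ring
  have hQ : ∀ s : ℤ, -(i : ℤ) < s → s < i → 0 + s * d ∈ A - A := by
    have key : ∀ n : ℕ, n < i → (n : ZMod p) * d ∈ A - A := by
      intro n hn
      refine Finset.mem_sub.2 ⟨_, hI n hn, _, hI 0 (by omega), ?_⟩
      push_cast
      ring
    intro s hs1 hs2
    rcases le_total 0 s with h | h
    · lift s to ℕ using h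
      simpa using key s (by omega)
    · obtain ⟨n, rfl⟩ : ∃ n : ℕ, s = -n := ⟨s.natAbs, by omega⟩
      simpa using hneg _ (key n (by omega))
  -- the run `J - I` stops at both ends
  have hend1 : b - a + j * d ∉ A - A := by
    obtain ⟨x, hx, hx'⟩ := hcov _ hbj
    rcases hA x hx with ⟨t, ht, rfl⟩ | ⟨t, ht, rfl⟩
    · rcases Nat.eq_zero_or_pos t with rfl | h0
      · convert hx' using 2
        push_cast
        ring
      · refine absurd ?_ hx'
        have := hR (j - t) (by omega) (by omega)
        convert this using 1
        push_cast
        ring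
    · refine absurd ?_ hx'
      have := hQ (j - t) (by omega) (by omega)
      convert this using 1
      push_cast
      ring
  have hend2 : b - a - i * d ∉ A - A := by
    obtain ⟨x, hx, hx'⟩ := hcov _ hb
    rcases hA x hx with ⟨t, ht, rfl⟩ | ⟨t, ht, rfl⟩
    · by_cases h0 : t + 1 = i
      · convert hx' using 2
        rw [← h0]
        push_cast
        ring
      · refine absurd ?_ hx'
        have := hR (-1 - t) (by omega) (by omega)
        convert this using 1
        push_cast
        ring
    · refine absurd ?_ hx'
      have := hQ (-1 - t) (by omega) (by omega)
      convert this using 1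
      push_cast
      ring
  have hend1' : a - b - j * d ∉ A - A := fun h => hend1 (by
    have := hneg _ h
    convert this using 1
    ring)
  have hend2' : a - b + i * d ∉ A - A := fun h => hend2 (by
    have := hneg _ h
    convert this using 1
    ring)
  have hcen : b + b + j * d ≠ a + a + i * d := by
    intro h
    refine hne (card_add_eq_card_sub_of_symm (a + a + (i - 1) * d) fun x hx => ?_)
    rcases hA x hx with ⟨t, ht, rfl⟩ | ⟨t, ht, rfl⟩
    · have := hI (i - 1 - t) (by omega)
      convert this using 1
      rw [Nat.cast_sub (by omega), Nat.cast_sub (by omega)]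
      push_cast
      ring
    · have := hJ (j - 1 - t) (by omega)
      convert this using 1
      rw [Nat.cast_sub (by omega), Nat.cast_sub (by omega)]
      push_cast
      linear_combination -h
  have hcard : ∀ (c : ZMod p) (u v : ℤ), v - u < p →
      #((Finset.Icc u v).image fun s : ℤ => c + s * d) = (v + 1 - u).toNat := by
    intro c u v huv
    rw [Finset.card_image_of_injOn (intCast_mul_injOn hd c huv), Int.card_Icc]
  set R := (Finset.Icc (-(i : ℤ) + 1) (j - 1)).image fun s : ℤ => b - a + s * d with hRdef
  set R' := (Finset.Icc (-(j : ℤ) + 1) (i - 1)).image fun s : ℤ => a - b + s * d with hRdef'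
  set Q := (Finset.Icc (-(i : ℤ) + 1) (i - 1)).image fun s : ℤ => 0 + s * d with hQdef
  have cR : #R = i + j - 1 := by rw [hRdef, hcard _ _ _ (by omega)]; omega
  have cR' : #R' = i + j - 1 := by rw [hRdef', hcard _ _ _ (by omega)]; omega
  have cQ : #Q = 2 * i - 1 := by rw [hQdef, hcard _ _ _ (by omega)]; omega
  have dRR' : Disjoint R R' := by
    rw [Finset.disjoint_left]
    intro y hy hy'
    simp only [hRdef, hRdef', Finset.mem_image, Finset.mem_Icc] at hy hy'
    obtain ⟨s, hs, rfl⟩ := hy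
    obtain ⟨t, ht, h⟩ := hy'
    rcases lt_trichotomy (j - s) (i - t) with h1 | h1 | h1
    · apply hend1
      have := hR' (t + (j - s)) (by omega) (by omega)
      convert this using 1
      push_cast
      linear_combination -h
    · apply hcen
      have h2 : (j : ZMod p) - s = i - t := by exact_mod_cast congrArg (Int.cast : ℤ → ZMod p) h1
      linear_combination -h + d * h2
    · apply hend2'
      have := hR (s + (i - t)) (by omega) (by omega)
      convert this using 1
      push_cast
      linear_combination h
  have dRQ : Disjoint R Q := by
    rw [Finset.disjoint_left]
    intro y hy hy'
    simp only [hRdef, hQdef, Finset.mem_image, Finset.mem_Icc] at hy hy'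
    obtain ⟨s, hs, rfl⟩ := hy
    obtain ⟨q, hq, h⟩ := hy'
    by_cases h1 : q + (j - s) < i
    · apply hend1
      have := hQ (q + (j - s)) (by omega) (by omega)
      convert this using 1
      push_cast
      linear_combination -h
    · apply hend2
      have := hQ (q - (i + s)) (by omega) (by omega)
      convert this using 1
      push_cast
      linear_combination -h
  have dR'Q : Disjoint R' Q := by
    rw [Finset.disjoint_left]
    intro y hy hy'
    simp only [hRdef', hQdef, Finset.mem_image, Finset.mem_Icc] at hy hy'
    obtain ⟨s, hs, rfl⟩ := hy
    obtain ⟨q, hq, h⟩ := hy'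
    by_cases h1 : q + (i - s) < i
    · apply hend2'
      have := hQ (q + (i - s)) (by omega) (by omega)
      convert this using 1
      push_cast
      linear_combination -h
    · apply hend1'
      have := hQ (q - (j + s)) (by omega) (by omega)
      convert this using 1
      push_cast
      linear_combination -h
  have hsub : R ∪ R' ∪ Q ⊆ A - A := by
    intro y hy
    simp only [Finset.mem_union, hRdef, hRdef', hQdef, Finset.mem_image, Finset.mem_Icc] at hy
    rcases hy with (⟨s, hs, rfl⟩ | ⟨s, hs, rfl⟩) | ⟨s, hs, rfl⟩
    · exact hR s (by omega) (by omega)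
    · exact hR' s (by omega) (by omega)
    · exact hQ s (by omega) (by omega)
  have := Finset.card_le_card hsub
  rw [Finset.card_union_of_disjoint (Finset.disjoint_union_left.2 ⟨dRQ, dR'Q⟩),
    Finset.card_union_of_disjoint dRR'] at this
  omega

lemma no_two_runs {p : ℕ} [Fact p.Prime] {A : Finset (ZMod p)} (hm : 4 ≤ #A)
    (hp : 2 * #A + 1 ≤ p) (hE : #(A - A) ≤ 2 * #A + 1) (hne : #(A + A) ≠ #(A - A))
    (hcov : ∀ x ∉ A, ∃ a ∈ A, x - a ∉ A - A) {d : ZMod p} (hd : d ≠ 0)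
    (h : #(A ∩ (d +ᵥ A)) + 2 = #A) : False := by
  have hAu : A ≠ univ := by
    rintro rfl
    rw [Finset.card_univ, ZMod.card] at hp
    omega
  have hL : #(A \ (d +ᵥ A)) = 2 := by
    have := Finset.card_sdiff_add_card_inter A (d +ᵥ A)
    omega
  obtain ⟨a, b, hab, hL⟩ := Finset.card_eq_two.1 hL
  have ha : a ∈ A \ (d +ᵥ A) := by simp [hL]
  have hb : b ∈ A \ (d +ᵥ A) := by simp [hL]
  rw [Finset.mem_sdiff, mem_tr] at ha hb
  obtain ⟨i, hi1, hI, hIe, hIi⟩ := exists_run hd hAu ha.1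
  obtain ⟨j, hj1, hJ, hJe, hJi⟩ := exists_run hd hAu hb.1
  have hA : ∀ x ∈ A, (∃ t < i, x = a + t * d) ∨ (∃ t < j, x = b + t * d) := by
    intro x hx
    obtain ⟨c, hc, t, rfl, ht⟩ := exists_start hd hAu hx
    rw [hL, Finset.mem_insert, Finset.mem_singleton] at hc
    rcases hc with rfl | rfl
    · left
      refine ⟨t, ?_, rfl⟩
      by_contra! hti
      exact hIe (ht i hti)
    · right
      refine ⟨t, ?_, rfl⟩
      by_contra! hti
      exact hJe (ht j hti)
  have him : i ≤ #A := by
    rw [← Finset.card_range i, ← Finset.card_image_of_injOn hIi]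
    refine Finset.card_le_card fun x hx => ?_
    obtain ⟨t, ht, rfl⟩ := Finset.mem_image.1 hx
    exact hI t (Finset.mem_range.1 ht)
  have hjm : j ≤ #A := by
    rw [← Finset.card_range j, ← Finset.card_image_of_injOn hJi]
    refine Finset.card_le_card fun x hx => ?_
    obtain ⟨t, ht, rfl⟩ := Finset.mem_image.1 hx
    exact hJ t (Finset.mem_range.1 ht)
  have hijm : #A ≤ i + j := by
    have hsub : A ⊆ ((Finset.range i).image fun t : ℕ => a + t * d) ∪
        ((Finset.range j).image fun t : ℕ => b + t * d) := by
      intro x hx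
      simp only [Finset.mem_union, Finset.mem_image, Finset.mem_range]
      rcases hA x hx with ⟨t, ht, rfl⟩ | ⟨t, ht, rfl⟩
      · exact Or.inl ⟨t, ht, rfl⟩
      · exact Or.inr ⟨t, ht, rfl⟩
    refine (Finset.card_le_card hsub).trans ((Finset.card_union_le _ _).trans ?_)
    exact add_le_add (Finset.card_image_le.trans (by simp)) (Finset.card_image_le.trans (by simp))
  rcases lt_trichotomy i j with hij | rfl | hij
  · exact two_runs_aux hm hp hE hne hcov hd hJ hI (fun x hx => (hA x hx).symm) ha.2 hIe hi1 hij
      hjm (by omega)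
  · -- runs of equal length are exchanged by a reflection
    refine hne (card_add_eq_card_sub_of_symm (a + b + (i - 1) * d) fun x hx => ?_)
    rcases hA x hx with ⟨t, ht, rfl⟩ | ⟨t, ht, rfl⟩
    · have := hJ (i - 1 - t) (by omega)
      convert this using 1
      rw [Nat.cast_sub (by omega), Nat.cast_sub (by omega)]
      push_cast
      ring
    · have := hI (i - 1 - t) (by omega)
      convert this using 1
      rw [Nat.cast_sub (by omega), Nat.cast_sub (by omega)]
      push_cast
      ring
  · exact two_runs_aux hm hp hE hne hcov hd hI hJ hA hb.2 hJe hj1 hij him hijm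

/-! ### Tight sets with three elements -/

lemma three_term_aux {p : ℕ} [Fact p.Prime] {u v w : ZMod p} (huv : u ≠ v)
    (h : 3 * u = 2 * v + w) :
    ∃ α d : ZMod p, d ≠ 0 ∧ ({w, u, v} : Finset (ZMod p)) = {α, α + 2 * d, α + 3 * d} := by
  refine ⟨w, v - u, sub_ne_zero.2 huv.symm, ?_⟩
  rw [show w + 2 * (v - u) = u by linear_combination -h,
    show w + 3 * (v - u) = v by linear_combination -h]

/-- The ten triple sums from a three-term set that is not a progression can only collide if the
set is similar to `{0, 2, 3}`. -/
lemma eq_of_card_triple_le {p : ℕ} [Fact p.Prime] (h2 : (2 : ZMod p) ≠ 0) (h3 : (3 : ZMod p) ≠ 0)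
    {a b c : ZMod p} (hab : a ≠ b) (hac : a ≠ c) (hbc : b ≠ c) (ha : 2 * a ≠ b + c)
    (hb : 2 * b ≠ a + c) (hc : 2 * c ≠ a + b)
    (h : #(({a, b, c} : Finset (ZMod p)) + {a, b, c} + {a, b, c}) ≤ 9) :
    ∃ α d : ZMod p, d ≠ 0 ∧ ({a, b, c} : Finset (ZMod p)) = {α, α + 2 * d, α + 3 * d} := by
  by_cases h1 : 3 * a = 2 * b + c
  · rw [show ({a, b, c} : Finset (ZMod p)) = {c, a, b} by ext; simp; tauto]
    exact three_term_aux hab h1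
  by_cases h1' : 3 * a = 2 * c + b
  · rw [show ({a, b, c} : Finset (ZMod p)) = {b, a, c} by ext; simp; tauto]
    exact three_term_aux hac h1'
  by_cases h4 : 3 * b = 2 * a + c
  · rw [show ({a, b, c} : Finset (ZMod p)) = {c, b, a} by ext; simp; tauto]
    exact three_term_aux hab.symm h4
  by_cases h4' : 3 * b = 2 * c + a
  · exact three_term_aux hbc h4'
  by_cases h5 : 3 * c = 2 * a + b
  · rw [show ({a, b, c} : Finset (ZMod p)) = {b, c, a} by ext; simp; tauto]
    exact three_term_aux hac.symm h5
  by_cases h5' : 3 * c = 2 * b + a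
  · rw [show ({a, b, c} : Finset (ZMod p)) = {a, c, b} by ext; simp; tauto]
    exact three_term_aux hbc.symm h5'
  exfalso
  have e1 : 2 * a ≠ 2 * b := fun h => hab (mul_left_cancel₀ h2 h)
  have e2 : 2 * a ≠ 2 * c := fun h => hac (mul_left_cancel₀ h2 h)
  have e3 : 2 * b ≠ 2 * c := fun h => hbc (mul_left_cancel₀ h2 h)
  have f1 : 3 * a ≠ 3 * b := fun h => hab (mul_left_cancel₀ h3 h)
  have f2 : 3 * a ≠ 3 * c := fun h => hac (mul_left_cancel₀ h3 h)
  have f3 : 3 * b ≠ 3 * c := fun h => hbc (mul_left_cancel₀ h3 h)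
  set L : List (ZMod p) := [a + a + a, b + b + b, c + c + c, a + a + b, a + a + c, b + b + a,
    b + b + c, c + c + a, c + c + b, a + b + c] with hL
  have hnd : L.Nodup := by
    simp only [hL, List.nodup_cons, List.mem_cons, List.not_mem_nil, or_false, not_or,
      not_false_eq_true, List.nodup_nil, and_true]
    refine ⟨⟨?_, ?_, ?_, ?_, ?_, ?_, ?_, ?_, ?_⟩, ⟨?_, ?_, ?_, ?_, ?_, ?_, ?_, ?_⟩,
      ⟨?_, ?_, ?_, ?_, ?_, ?_, ?_⟩, ⟨?_, ?_, ?_, ?_, ?_, ?_⟩, ⟨?_, ?_, ?_, ?_, ?_⟩,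
      ⟨?_, ?_, ?_, ?_⟩, ⟨?_, ?_, ?_⟩, ⟨?_, ?_⟩, ?_⟩ <;> grind
  have hsub : L.toFinset ⊆ ({a, b, c} : Finset (ZMod p)) + {a, b, c} + {a, b, c} := by
    intro x hx
    have key : ∀ u v w : ZMod p, u ∈ ({a, b, c} : Finset (ZMod p)) →
        v ∈ ({a, b, c} : Finset (ZMod p)) → w ∈ ({a, b, c} : Finset (ZMod p)) →
        u + v + w ∈ ({a, b, c} : Finset (ZMod p)) + {a, b, c} + {a, b, c} :=
      fun u v w hu hv hw => Finset.add_mem_add (Finset.add_mem_add hu hv) hw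
    simp only [hL, List.mem_toFinset, List.mem_cons, List.not_mem_nil, or_false] at hx
    rcases hx with rfl | rfl | rfl | rfl | rfl | rfl | rfl | rfl | rfl | rfl <;>
      exact key _ _ _ (by simp) (by simp) (by simp)
  have := Finset.card_le_card hsub
  rw [List.toFinset_card_of_nodup hnd] at this
  simp [hL] at this
  omega

lemma card_add_pair_add_pair {p : ℕ} (Y : Finset (ZMod p)) (x y : ZMod p) :
    #(Y + {x, y} + {x, y}) + #Y ≤ 2 * #(Y + {x, y}) := by
  have h1 := card_add_pair (Y + {x, y}) x y
  have h2 : y +ᵥ Y ⊆ (Y + {x, y}) ∩ ((y - x) +ᵥ (Y + {x, y})) := by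
    intro z hz
    rw [mem_tr] at hz
    rw [Finset.mem_inter, mem_tr]
    exact ⟨Finset.mem_add.2 ⟨_, hz, y, by simp, by ring⟩,
      Finset.mem_add.2 ⟨_, hz, x, by simp, by ring⟩⟩
  have h3 := Finset.card_le_card h2
  rw [Finset.card_vadd_finset] at h3
  omega

/-- No three-element set `M` is tight when every nontrivial translate of `A` misses
three elements of `A`.
All two-element subsets `P` of `M` have `A + P = A + M`, whence `#(3M) ≤ 9` and `M` is similar to
`{0, 2, 3}`. Then each element of `A` is preceded by another at distance `2d` or `3d`, so three
consecutive gaps, once they occur, never end. -/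
lemma no_tight_triple {p : ℕ} [Fact p.Prime] {A M : Finset (ZMod p)} (hm : 4 ≤ #A)
    (hp : 4 * #A + 1 ≤ p) (h : ∀ d : ZMod p, d ≠ 0 → #(A ∩ (d +ᵥ A)) + 3 ≤ #A)
    (hM : Tight A 1 M) (hM3 : #M = 3) (hMs : ∀ e : ZMod p, e ≠ 0 → #(M ∩ (e +ᵥ M)) ≤ 1) :
    False := by
  have hAn : A.Nonempty := Finset.card_pos.1 (by omega)
  have hgap : SumGap A 1 := sumGap_one hAn fun d hd => by have := h d hd; omega
  have hMA : #(A + M) = #A + 3 := by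
    have := hM.2.2
    rw [add_comm M A] at this
    omega
  have hpair : ∀ x ∈ M, ∀ y ∈ M, x ≠ y → A + {x, y} = A + M := by
    intro x hx y hy hxy
    have hs : ({x, y} : Finset (ZMod p)) ⊆ M := by
      intro z hz
      rw [Finset.mem_insert, Finset.mem_singleton] at hz
      rcases hz with rfl | rfl <;> assumption
    refine Finset.eq_of_subset_of_card_le (Finset.add_subset_add_left hs) ?_
    have h1 := card_add_pair A x y
    have h2 := h (y - x) (sub_ne_zero.2 hxy.symm)
    omega
  have h2 : (2 : ZMod p) ≠ 0 := by
    intro h0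
    have := Nat.le_of_dvd (by norm_num) ((ZMod.natCast_eq_zero_iff 2 p).1 (by exact_mod_cast h0))
    omega
  have h3 : (3 : ZMod p) ≠ 0 := by
    intro h0
    have := Nat.le_of_dvd (by norm_num) ((ZMod.natCast_eq_zero_iff 3 p).1 (by exact_mod_cast h0))
    omega
  -- a progression of length three overlaps its shift in two terms
  have hnap : ∀ x ∈ M, ∀ y ∈ M, ∀ z ∈ M, x ≠ y → y ≠ z → 2 * y ≠ x + z := by
    intro x hx y hy z hz hxy hyz he
    have h1 := hMs (y - x) (sub_ne_zero.2 hxy.symm)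
    have hy' : y ∈ M ∩ ((y - x) +ᵥ M) := by
      rw [Finset.mem_inter, mem_tr]
      exact ⟨hy, by simpa using hx⟩
    have hz' : z ∈ M ∩ ((y - x) +ᵥ M) := by
      rw [Finset.mem_inter, mem_tr]
      exact ⟨hz, by rwa [show z - (y - x) = y by linear_combination -he]⟩
    exact hyz (Finset.card_le_one.1 h1 _ hy' _ hz')
  have h9 : #(M + M + M) ≤ 9 := by
    obtain ⟨x, hx, y, hy, hxy⟩ := Finset.one_lt_card.1 (by omega : 1 < #M)
    have hP := hpair x hx y hy hxy
    set P : Finset (ZMod p) := {x, y}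
    have e1 : A + M + M = A + P + P := by
      rw [← hP, add_right_comm, ← hP]
    have e2 : A + M + M + M = A + P + P + P := by
      rw [e1, add_right_comm, add_right_comm A, ← hP]
    have c1 : #(A + P + P) + #A ≤ 2 * #(A + P) := card_add_pair_add_pair A x y
    have c2 : #(A + P + P + P) + #(A + P) ≤ 2 * #(A + P + P) :=
      card_add_pair_add_pair (A + P) x y
    have hc : #(A + P) = #A + 3 := by rw [hP, hMA]
    have e3 : M + M + M + A = A + P + P + P := by
      rw [← e2]
      abel
    have hMn : M.Nonempty := ⟨x, hx⟩
    have c3 : #M ≤ #(M + M) := card_le_add_right hMn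
    have c4 : #(M + M) ≤ #(M + M + M) := card_le_add_right hMn
    have := hgap (M + M + M) (by omega) (by rw [e3]; omega)
    rw [e3] at this
    omega
  obtain ⟨a, b, c, hab, hac, hbc, hMe⟩ := Finset.card_eq_three.1 hM3
  have haM : a ∈ M := by simp [hMe]
  have hbM : b ∈ M := by simp [hMe]
  have hcM : c ∈ M := by simp [hMe]
  obtain ⟨α, d, hd, hMd⟩ := eq_of_card_triple_le h2 h3 hab hac hbc
    (fun he => hnap b hbM a haM c hcM hab.symm hac he)
    (hnap a haM b hbM c hcM hab hbc)
    (hnap a haM c hcM b hbM hac hbc.symm) (by rw [← hMe]; exact h9)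
  rw [← hMe] at hMd
  have hα : α ∈ M := by simp [hMd]
  have hPd := hpair (α + 2 * d) (by simp [hMd]) (α + 3 * d) (by simp [hMd])
    (fun he => hd (by linear_combination -he))
  have hprec : ∀ x ∈ A, x - 2 * d ∈ A ∨ x - 3 * d ∈ A := by
    intro x hx
    have : x + α ∈ A + {α + 2 * d, α + 3 * d} := by
      rw [hPd]
      exact Finset.add_mem_add hx hα
    obtain ⟨y, hy, z, hz, hxz⟩ := Finset.mem_add.1 this
    rw [Finset.mem_insert, Finset.mem_singleton] at hz
    rcases hz with rfl | rfl
    · left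
      rwa [show x - 2 * d = y by linear_combination -hxz]
    · right
      rwa [show x - 3 * d = y by linear_combination -hxz]
  have hc0 : #(A + {0, d}) = #A + 3 := by
    have e1 := card_add_pair A 0 d
    have e2 := card_add_pair A (α + 2 * d) (α + 3 * d)
    rw [hPd, hMA, show α + 3 * d - (α + 2 * d) = d by ring] at e2
    rw [sub_zero] at e1
    omega
  have hc1 := card_add_pair_add_pair A 0 d
  obtain ⟨z, hz⟩ : ∃ z, z ∉ A + {0, d} + {0, d} := by
    by_contra! hall
    rw [Finset.eq_univ_iff_forall.2 hall, Finset.card_univ, ZMod.card] at hc1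
    omega
  have m0 : (0 : ZMod p) ∈ ({0, d} : Finset (ZMod p)) := by simp
  have md : d ∈ ({0, d} : Finset (ZMod p)) := by simp
  have hz' : z ∉ A ∧ z - d ∉ A ∧ z - 2 * d ∉ A :=
    ⟨fun hA => hz (Finset.mem_add.2 ⟨_, Finset.add_mem_add hA m0, 0, m0, by ring⟩),
      fun hA => hz (Finset.mem_add.2 ⟨_, Finset.add_mem_add hA m0, d, md, by ring⟩),
      fun hA => hz (Finset.mem_add.2 ⟨_, Finset.add_mem_add hA md, d, md, by ring⟩)⟩
  have huniv := closed_eq_univ (S := univ.filter fun z => z ∉ A ∧ z - d ∉ A ∧ z - 2 * d ∉ A) hd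
    ⟨z, by simpa using hz'⟩ (by
      intro x hx
      simp only [Finset.mem_filter, Finset.mem_univ, true_and] at hx ⊢
      refine ⟨fun hA => ?_, by simpa using hx.1, ?_⟩
      · rcases hprec _ hA with h' | h'
        · exact hx.2.1 (by rwa [show x - d = x + d - 2 * d by ring])
        · exact hx.2.2 (by rwa [show x - 2 * d = x + d - 3 * d by ring])
      · rw [show x + d - 2 * d = x - d by ring]
        exact hx.2.1)
  obtain ⟨x, hx⟩ := hAn
  have hx' := Finset.mem_univ x
  rw [← huniv, Finset.mem_filter] at hx'
  exact hx'.2.1 hx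

/-! ### Mixed sumsets of an extremal set -/

lemma foldSum_add {G : Type*} [AddCommMonoid G] [DecidableEq G] (A : Finset G) (i j : ℕ) :
    foldSum (i + j) A = foldSum i A + foldSum j A := by
  induction i with
  | zero => simp [foldSum, Finset.singleton_zero]
  | succ i ih => rw [Nat.succ_add, foldSum, foldSum, ih, add_assoc]

lemma foldSum_one {G : Type*} [AddCommMonoid G] [DecidableEq G] (A : Finset G) :
    foldSum 1 A = A := by
  simp [foldSum, Finset.singleton_zero]

lemma foldSum_neg {p : ℕ} (A : Finset (ZMod p)) (j : ℕ) : foldSum j (-A) = -foldSum j A := by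
  induction j with
  | zero => simp [foldSum]
  | succ j ih => rw [foldSum, foldSum, ih, neg_add]

/-- The mixed sumset `iA - jA`. -/
def mixSum {p : ℕ} (A : Finset (ZMod p)) (i j : ℕ) : Finset (ZMod p) :=
  foldSum i A + foldSum j (-A)

lemma mixSum_add {p : ℕ} (A : Finset (ZMod p)) (i j u v : ℕ) :
    mixSum A (i + u) (j + v) = mixSum A i j + mixSum A u v := by
  simp only [mixSum, foldSum_add]
  abel

lemma mixSum_one_zero {p : ℕ} (A : Finset (ZMod p)) : mixSum A 1 0 = A := by
  simp [mixSum, foldSum, Finset.singleton_zero]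

lemma mixSum_zero_one {p : ℕ} (A : Finset (ZMod p)) : mixSum A 0 1 = -A := by
  simp [mixSum, foldSum, Finset.singleton_zero]

lemma mixSum_zero_right {p : ℕ} (A : Finset (ZMod p)) (i : ℕ) : mixSum A i 0 = foldSum i A := by
  simp [mixSum, foldSum, Finset.singleton_zero]

lemma foldSum_nonempty {G : Type*} [AddCommMonoid G] [DecidableEq G] {A : Finset G}
    (hA : A.Nonempty) (i : ℕ) : (foldSum i A).Nonempty := by
  induction i with
  | zero => simp [foldSum]
  | succ i ih => exact hA.add ih

lemma mixSum_nonempty {p : ℕ} {A : Finset (ZMod p)} (hA : A.Nonempty) (i j : ℕ) :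
    (mixSum A i j).Nonempty :=
  (foldSum_nonempty hA i).add (foldSum_nonempty hA.neg j)

lemma SumGap.neg {p : ℕ} {A : Finset (ZMod p)} {t : ℕ} (h : SumGap A t) : SumGap (-A) t := by
  intro X hX h2
  have e : X + -A = -(-X + A) := by rw [neg_add, neg_neg]
  rw [e, Finset.card_neg] at h2 ⊢
  have := h (-X) (by rwa [Finset.card_neg]) h2
  rwa [Finset.card_neg] at this ⊢

/-- Iterating Vosper's bound: each further summand `A` or `-A` gains at least `#A` elements. -/
lemma card_add_mixSum {p : ℕ} {A : Finset (ZMod p)} (hA : A.Nonempty) (h : SumGap A 1)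
    {Y : Finset (ZMod p)} (hY : 2 ≤ #Y) (u v : ℕ) (h2 : #(Y + mixSum A u v) + 2 ≤ p) :
    #Y + (u + v) * #A ≤ #(Y + mixSum A u v) := by
  induction u with
  | zero =>
    induction v with
    | zero => simp [mixSum, foldSum, Finset.singleton_zero]
    | succ v ih =>
      have e : Y + mixSum A 0 (v + 1) = Y + mixSum A 0 v + -A := by
        rw [add_assoc, ← mixSum_zero_one A, ← mixSum_add]
      rw [e] at h2 ⊢
      have h3 : #(Y + mixSum A 0 v) ≤ #(Y + mixSum A 0 v + -A) := card_le_add_right hA.neg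
      have h4 : #Y ≤ #(Y + mixSum A 0 v) := card_le_add_right (mixSum_nonempty hA _ _)
      have h5 := ih (by omega)
      have h6 := h.neg _ (by omega) h2
      rw [Finset.card_neg] at h6
      rw [show (0 + (v + 1)) * #A = (0 + v) * #A + #A by ring]
      omega
  | succ u ih =>
    have e : Y + mixSum A (u + 1) v = Y + mixSum A u v + A := by
      have h0 := mixSum_add A u v 1 0
      rw [mixSum_one_zero, add_zero] at h0
      rw [h0, add_assoc]
    rw [e] at h2 ⊢
    have h3 : #(Y + mixSum A u v) ≤ #(Y + mixSum A u v + A) := card_le_add_right hA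
    have h4 : #Y ≤ #(Y + mixSum A u v) := card_le_add_right (mixSum_nonempty hA _ _)
    have h5 := ih (by omega)
    have h6 := h _ (by omega) h2
    rw [show (u + 1 + v) * #A = (u + v) * #A + #A by ring]
    omega

/-- Along a splitting of `(k, l)`, the two mixed sumsets contain no pair of opposite elements. -/
lemma KLSumFree.neg_notMem {p k l : ℕ} {A : Finset (ZMod p)} (h : KLSumFree k l A)
    {i j u v : ℕ} (hi : i + u = k) (hj : j + v = l) {x : ZMod p} (hx : x ∈ mixSum A i j) :
    -x ∉ mixSum A u v := by
  intro hx'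
  have h0 := Finset.add_mem_add hx hx'
  rw [← mixSum_add, hi, hj, add_neg_cancel, mixSum, foldSum_neg] at h0
  obtain ⟨y, hy, z, hz, hyz⟩ := Finset.mem_add.1 h0
  rw [Finset.mem_neg'] at hz
  rw [show -z = y by linear_combination -hyz] at hz
  exact Finset.disjoint_left.1 h hy hz

lemma KLSumFree.card_add_card_le {p k l : ℕ} [Fact p.Prime] {A : Finset (ZMod p)}
    (h : KLSumFree k l A) {i j u v : ℕ} (hi : i + u = k) (hj : j + v = l) :
    #(mixSum A i j) + #(mixSum A u v) ≤ p := by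
  rw [← Finset.card_neg (mixSum A u v), ← Finset.card_union_of_disjoint]
  · exact (Finset.card_le_univ _).trans (ZMod.card p).le
  · rw [Finset.disjoint_left]
    intro x hx hx'
    exact h.neg_notMem hi hj hx (Finset.mem_neg'.1 hx')

lemma mixSum_one_one {p : ℕ} (A : Finset (ZMod p)) : mixSum A 1 1 = A - A := by
  rw [mixSum, foldSum_one, foldSum_one, sub_eq_add_neg]

/-- In odd characteristic, `A - A` consists of `0` and pairs `{x, -x}`. -/
lemma odd_card_sub_self {p : ℕ} [Fact p.Prime] (hp : p ≠ 2) {A : Finset (ZMod p)}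
    (hA : A.Nonempty) : Odd #(A - A) := by
  have h2 : (2 : ZMod p) ≠ 0 := by
    intro h0
    have := (Nat.prime_dvd_prime_iff_eq (Fact.out : p.Prime) Nat.prime_two).1
      ((ZMod.natCast_eq_zero_iff 2 p).1 (by exact_mod_cast h0))
    exact hp this
  have h0 : (0 : ZMod p) ∈ A - A := by
    obtain ⟨a, ha⟩ := hA
    exact Finset.mem_sub.2 ⟨a, ha, a, ha, sub_self a⟩
  have hs : ∑ x ∈ (A - A).erase 0, (1 : ZMod 2) = 0 := by
    refine Finset.sum_involution (fun x _ => -x) (fun _ _ => by decide) ?_ ?_ ?_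
    · intro x hx _ he
      have h3 : 2 * x = 0 := by linear_combination -he
      rcases mul_eq_zero.1 h3 with h3 | h3
      · exact h2 h3
      · exact (Finset.mem_erase.1 hx).1 h3
    · intro x hx
      rw [Finset.mem_erase] at hx ⊢
      refine ⟨neg_ne_zero.2 hx.1, ?_⟩
      obtain ⟨y, hy, z, hz, rfl⟩ := Finset.mem_sub.1 hx.2
      exact Finset.mem_sub.2 ⟨z, hz, y, hy, by ring⟩
    · intro x _
      simp
  rw [Finset.sum_const, nsmul_eq_mul, mul_one, ZMod.natCast_eq_zero_iff] at hs
  have := Finset.card_erase_add_one h0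
  rw [Nat.odd_iff]
  omega

/-- The structure forced on a non-progression `A` of extremal size: the parity of `#(A - A)` uses up
all the slack, which rules out `l ≥ 2` and pins down all sumsets for `l = 1`. -/
lemma extremal_structure {p k l : ℕ} [Fact p.Prime] {A : Finset (ZMod p)} (hl : 0 < l)
    (hkl : l < k) (hk3 : 3 ≤ k) (hA : KLSumFree k l A) (hm : 3 ≤ #A)
    (hcard : p ≤ (k + l) * #A + 1) (hgap : SumGap A 1) :
    p = (k + 1) * #A + 1 ∧ l = 1 ∧ #(A - A) = 2 * #A + 1 ∧ #(A + A) = 2 * #A ∧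
      (∀ x ∉ A, ∃ a ∈ A, x - a ∉ A - A) ∧ k * #A + 1 ≤ #(foldSum k A) ∧
      (4 ≤ k → #(A + A + A) ≤ 3 * #A) := by
  have hAn : A.Nonempty := Finset.card_pos.1 (by omega)
  have hpos : ∀ u v, 1 ≤ u + v → 3 ≤ #(mixSum A u v) := by
    intro u v huv
    rcases Nat.eq_zero_or_pos u with rfl | hu
    · obtain ⟨w, rfl⟩ : ∃ w, v = 1 + w := ⟨v - 1, by omega⟩
      have : mixSum A 0 (1 + w) = -A + mixSum A 0 w := by
        rw [← mixSum_zero_one, ← mixSum_add]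
      rw [this]
      refine le_trans ?_ (card_le_add_right (mixSum_nonempty hAn _ _))
      rwa [Finset.card_neg]
    · obtain ⟨w, rfl⟩ : ∃ w, u = 1 + w := ⟨u - 1, by omega⟩
      have e := mixSum_add A 1 0 w v
      rw [mixSum_one_zero, zero_add] at e
      rw [e]
      exact le_trans hm (card_le_add_right (mixSum_nonempty hAn _ _))
  have hlow : ∀ i j u v, 1 ≤ i + j → #(mixSum A (i + u) (j + v)) + 2 ≤ p →
      #(mixSum A i j) + (u + v) * #A ≤ #(mixSum A (i + u) (j + v)) := by
    intro i j u v hij h2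
    rw [mixSum_add] at h2 ⊢
    exact card_add_mixSum hAn hgap (by have := hpos i j hij; omega) u v h2
  have c10 : #(mixSum A 1 0) = #A := by rw [mixSum_one_zero]
  have c01 : #(mixSum A 0 1) = #A := by rw [mixSum_zero_one, Finset.card_neg]
  have hlow' : ∀ i, 1 ≤ i → #(mixSum A i 0) + 2 ≤ p → i * #A ≤ #(mixSum A i 0) := by
    intro i hi h2
    obtain ⟨u, rfl⟩ : ∃ u, i = 1 + u := ⟨i - 1, by omega⟩
    have := hlow 1 0 u 0 (by omega) h2
    rw [c10] at this
    linarith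
  have hlow'' : ∀ j, 1 ≤ j → #(mixSum A 0 j) + 2 ≤ p → j * #A ≤ #(mixSum A 0 j) := by
    intro j hj h2
    obtain ⟨u, rfl⟩ : ∃ u, j = 1 + u := ⟨j - 1, by omega⟩
    have := hlow 0 1 0 u (by omega) h2
    rw [c01] at this
    linarith
  have hpp : p.Prime := Fact.out
  have hpe : p = (k + l) * #A + 1 := by
    have h1 := hA.card_add_card_le (i := k) (j := 0) (u := 0) (v := l) (by omega) (by omega)
    have h2 := hpos k 0 (by omega)
    have h3 := hpos 0 l (by omega)
    have h4 := hlow' k (by omega) (by omega)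
    have h5 := hlow'' l (by omega) (by omega)
    have h6 : (k + l) * #A ≤ p := by rw [add_mul]; omega
    have h7 : (k + l) * #A ≠ p := by
      intro h
      rw [← h] at hpp
      exact Nat.not_prime_mul (by omega) (by omega) hpp
    omega
  have hp2 : p ≠ 2 := by nlinarith
  have c11 : #(mixSum A 1 1) = 2 * #A + 1 := by
    have h1 := hA.card_add_card_le (i := 1) (j := 1) (u := k - 1) (v := l - 1)
      (by omega) (by omega)
    have h2 := hpos 1 1 (by omega)
    have h3 := hpos (k - 1) (l - 1) (by omega)
    have h4 := hlow 1 0 0 1 (by omega) (by show #(mixSum A 1 1) + 2 ≤ p; omega)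
    have h5 := hlow 1 0 (k - 2) (l - 1) (by omega)
      (by rw [show 1 + (k - 2) = k - 1 by omega, zero_add]; omega)
    rw [show 1 + (k - 2) = k - 1 by omega, zero_add] at h5
    have h6 : (k + l) * #A = (k - 2 + (l - 1)) * #A + 3 * #A := by
      rw [← add_mul]
      congr 1
      omega
    have h7 := odd_card_sub_self hp2 hAn
    rw [← mixSum_one_one, Nat.odd_iff] at h7
    simp only [add_zero, zero_add, one_mul] at h4
    omega
  have hl1 : l = 1 := by
    by_contra hl1
    have h1 := hA.card_add_card_le (i := 1) (j := 1) (u := k - 1) (v := l - 1)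
      (by omega) (by omega)
    have h2 := hlow 1 1 (k - 2) (l - 2) (by omega)
      (by rw [show 1 + (k - 2) = k - 1 by omega, show 1 + (l - 2) = l - 1 by omega]; omega)
    rw [show 1 + (k - 2) = k - 1 by omega, show 1 + (l - 2) = l - 1 by omega] at h2
    have h6 : (k + l) * #A = (k - 2 + (l - 2)) * #A + 4 * #A := by
      rw [← add_mul]
      congr 1
      omega
    omega
  subst hl1
  -- lower bound for `uA - A`
  have hlow1 : ∀ u, 1 ≤ u → #(mixSum A u 1) + 2 ≤ p → (u + 1) * #A + 1 ≤ #(mixSum A u 1) := by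
    intro u hu h2
    obtain ⟨w, rfl⟩ : ∃ w, u = 1 + w := ⟨u - 1, by omega⟩
    have := hlow 1 1 w 0 (by omega) h2
    rw [c11] at this
    linarith
  have hup : ∀ i, 1 ≤ i → i < k → #(mixSum A i 0) ≤ i * #A := by
    intro i hi hik
    have h1 := hA.card_add_card_le (i := i) (j := 0) (u := k - i) (v := 1)
      (by omega) (by omega)
    have h2 := hpos i 0 (by omega)
    have h3 := hlow1 (k - i) (by omega) (by omega)
    have h4 : (k + 1) * #A = (k - i + 1) * #A + i * #A := by
      rw [← add_mul]
      congr 1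
      omega
    omega
  -- `(k - 1)A` is the complement of `A - A`, hence symmetric
  have hcompl : foldSum (k - 1) A = (A - A)ᶜ := by
    refine Finset.eq_of_subset_of_card_le ?_ ?_
    · intro x hx
      rw [Finset.mem_compl, ← mixSum_one_one]
      intro hx'
      have h1 := hA.neg_notMem (i := 1) (j := 1) (u := k - 1) (v := 0) (by omega) (by omega)
        (x := -x) (by
          rw [mixSum_one_one] at hx' ⊢
          obtain ⟨y, hy, z, hz, rfl⟩ := Finset.mem_sub.1 hx'
          exact Finset.mem_sub.2 ⟨z, hz, y, hy, by ring⟩)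
      rw [neg_neg, mixSum_zero_right] at h1
      exact h1 hx
    · rw [Finset.card_compl, ZMod.card, ← mixSum_one_one, c11, ← mixSum_zero_right]
      have h1 := hA.card_add_card_le (i := k - 1) (j := 0) (u := 1) (v := 1)
        (by omega) (by omega)
      have h2 := hlow' (k - 1) (by omega) (by omega)
      have h4 : (k + 1) * #A = (k - 1) * #A + 2 * #A := by
        rw [← add_mul]
        congr 1
        omega
      omega
  have hsymm : -foldSum (k - 1) A = foldSum (k - 1) A := by
    ext x
    rw [hcompl, Finset.mem_neg', Finset.mem_compl, Finset.mem_compl, not_iff_not]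
    constructor <;>
    · intro hx
      obtain ⟨y, hy, z, hz, hyz⟩ := Finset.mem_sub.1 hx
      refine Finset.mem_sub.2 ⟨z, hz, y, hy, ?_⟩
      linear_combination -hyz
  have hk : foldSum k A = A + foldSum (k - 1) A := by
    conv_lhs => rw [show k = (k - 1) + 1 by omega, foldSum]
  have hkA : k * #A + 1 ≤ #(foldSum k A) := by
    have e : mixSum A (k - 1) 1 = -foldSum k A := by
      rw [mixSum, foldSum_one, hk, neg_add, hsymm, add_comm]
    have h1 := hA.card_add_card_le (i := k - 1) (j := 1) (u := 1) (v := 0)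
      (by omega) (by omega)
    have h2 := hlow1 (k - 1) (by omega) (by omega)
    rw [e, Finset.card_neg, show k - 1 + 1 = k by omega] at h2
    exact h2
  have hkc : foldSum k A = Aᶜ := by
    refine Finset.eq_of_subset_of_card_le ?_ ?_
    · intro x hx
      rw [Finset.mem_compl]
      intro hx'
      have := Finset.disjoint_left.1 hA hx
      rw [foldSum_one] at this
      exact this hx'
    · rw [Finset.card_compl, ZMod.card]
      have : (k + 1) * #A = k * #A + #A := by ring
      omega
  refine ⟨hpe, rfl, by rw [← mixSum_one_one, c11], ?_, ?_, hkA, ?_⟩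
  · have e : A + A = mixSum A 2 0 := by
      rw [mixSum_zero_right]
      simp [foldSum, Finset.singleton_zero]
    rw [e]
    have h1 := hA.card_add_card_le (i := 2) (j := 0) (u := k - 2) (v := 1)
      (by omega) (by omega)
    have h2 := hpos (k - 2) 1 (by omega)
    exact le_antisymm (hup 2 (by omega) (by omega)) (hlow' 2 (by omega) (by omega))
  · intro x hx
    rw [← Finset.mem_compl, ← hkc, hk, hcompl] at hx
    obtain ⟨a, ha, y, hy, rfl⟩ := Finset.mem_add.1 hx
    refine ⟨a, ha, ?_⟩
    rw [add_sub_cancel_left]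
    exact Finset.mem_compl.1 hy
  · intro hk4
    have e : A + A + A = mixSum A 3 0 := by
      rw [mixSum_zero_right]
      simp [foldSum, Finset.singleton_zero, add_assoc]
    rw [e]
    exact hup 3 (by omega) (by omega)

/-- The `k`-fold sumset of a copy of `{0, 2, 3}` omits the second term of the obvious progression
containing it. -/
lemma card_foldSum_le {p : ℕ} (α d : ZMod p) (k : ℕ) (hk : 1 ≤ k) :
    #(foldSum k ({α, α + 2 * d, α + 3 * d} : Finset (ZMod p))) ≤ 3 * k := by
  have hsub : ∀ n : ℕ, foldSum n ({α, α + 2 * d, α + 3 * d} : Finset (ZMod p)) ⊆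
      ((Finset.range (3 * n + 1)).erase 1).image fun t : ℕ => n * α + t * d := by
    intro n
    induction n with
    | zero => simp [foldSum]
    | succ n ih =>
      intro x hx
      obtain ⟨y, hy, z, hz, rfl⟩ := Finset.mem_add.1 hx
      obtain ⟨t, ht, rfl⟩ := Finset.mem_image.1 (ih hz)
      rw [Finset.mem_erase, Finset.mem_range] at ht
      simp only [Finset.mem_insert, Finset.mem_singleton] at hy
      simp only [Finset.mem_image, Finset.mem_erase, Finset.mem_range]
      rcases hy with rfl | rfl | rfl
      · exact ⟨t, ⟨ht.1, by omega⟩, by push_cast; ring⟩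
      · exact ⟨t + 2, ⟨by omega, by omega⟩, by push_cast; ring⟩
      · exact ⟨t + 3, ⟨by omega, by omega⟩, by push_cast; ring⟩
  refine (Finset.card_le_card (hsub k)).trans (Finset.card_image_le.trans ?_)
  rw [Finset.card_erase_of_mem (by simp; omega), Finset.card_range]
  omega

set_option maxRecDepth 100000 in
/-- Every three-element `(3,1)`-sum-free subset of `ZMod 13` is a progression; the inequalities
spell out that no sum of three terms is again a term. -/
lemma zmod13_aux : ∀ a b c : ZMod 13, a ≠ b → a ≠ c → b ≠ c →
    3 * a ≠ b → 3 * a ≠ c → 3 * b ≠ a → 3 * b ≠ c → 3 * c ≠ a → 3 * c ≠ b →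
    2 * a + b ≠ c → 2 * a + c ≠ b → 2 * b + a ≠ c → 2 * b + c ≠ a →
    2 * c + a ≠ b → 2 * c + b ≠ a → a + b ≠ 0 → a + c ≠ 0 → b + c ≠ 0 → a ≠ 0 → b ≠ 0 → c ≠ 0 →
    2 * a = b + c ∨ 2 * b = a + c ∨ 2 * c = a + b := by
  decide

/-! ### Deriving the contradiction -/

/-- Sets with at most two elements are progressions. -/
lemma eq_apSet_of_card_le_two {p : ℕ} {A : Finset (ZMod p)} (h : #A ≤ 2) :
    ∃ a b : ZMod p, A = apSet p a b #A := by
  rcases Nat.lt_or_ge #A 1 with h0 | h1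
  · have hA : A = ∅ := Finset.card_eq_zero.1 (by omega)
    exact ⟨0, 0, by simp [hA, apSet]⟩
  rcases Nat.lt_or_ge #A 2 with h2 | h2
  · obtain ⟨x, hx⟩ := Finset.card_eq_one.1 (show #A = 1 by omega)
    exact ⟨x, 0, by simp [hx, apSet]⟩
  · have hA2 : #A = 2 := by omega
    obtain ⟨x, y, -, hxy⟩ := Finset.card_eq_two.1 hA2
    refine ⟨x, y - x, ?_⟩
    rw [hA2, hxy]
    ext z
    simp [apSet, Finset.range_add_one, or_comm]

/-- Three terms in progression overlap with a translate in two points. -/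
lemma two_mul_ne_of_overlap {p : ℕ} {A : Finset (ZMod p)} (hA3 : #A = 3)
    (h : ∀ d : ZMod p, d ≠ 0 → #(A ∩ (d +ᵥ A)) + 2 ≤ #A) {a b c : ZMod p} (ha : a ∈ A)
    (hb : b ∈ A) (hc : c ∈ A) (hab : a ≠ b) (hbc : b ≠ c) : 2 * b ≠ a + c := by
  intro he
  have h1 := h (b - a) (sub_ne_zero.2 hab.symm)
  have h2 : ({b, c} : Finset (ZMod p)) ⊆ A ∩ ((b - a) +ᵥ A) := by
    intro x hx
    simp only [Finset.mem_insert, Finset.mem_singleton] at hx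
    rw [Finset.mem_inter, mem_tr]
    rcases hx with rfl | rfl
    · exact ⟨hb, by rwa [sub_sub_cancel]⟩
    · refine ⟨hc, ?_⟩
      rwa [show x - (b - a) = b by linear_combination -he]
  have h3 := Finset.card_le_card h2
  rw [Finset.card_pair hbc] at h3
  omega

/-- A set with at least four elements satisfying the conclusions of `extremal_structure` cannot
exist: its minimal tight sets have neither two nor three elements. -/
lemma false_of_four_le_card {p : ℕ} [Fact p.Prime] {A : Finset (ZMod p)} (hm : 4 ≤ #A)
    (hp : 4 * #A + 1 ≤ p) (h : ∀ d : ZMod p, d ≠ 0 → #(A ∩ (d +ᵥ A)) + 2 ≤ #A)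
    (hsub : #(A - A) = 2 * #A + 1) (hadd : #(A + A) = 2 * #A)
    (hcov : ∀ x ∉ A, ∃ a ∈ A, x - a ∉ A - A) : False := by
  have hAn : A.Nonempty := Finset.card_pos.1 (by omega)
  have h3 : ∀ d : ZMod p, d ≠ 0 → #(A ∩ (d +ᵥ A)) + 3 ≤ #A := by
    intro d hd
    by_contra hlt
    have := h d hd
    exact no_two_runs hm (by omega) hsub.le (by omega) hcov hd (by omega)
  have hT : Tight A 1 A := ⟨by omega, by omega, by omega⟩
  obtain ⟨M, hM, hM3, hMs⟩ := exists_small_tight hAn h hT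
  have hM2 := hM.1
  rcases Nat.lt_or_ge #M 3 with hlt | hge
  · obtain ⟨d, hd, hd'⟩ := hM.exists_of_card_two (by omega)
    have := h3 d hd
    omega
  · exact no_tight_triple hm hp h3 hM (by omega) hMs

lemma natCast_ne_zero_of_lt {p n : ℕ} (hn : 0 < n) (hnp : n < p) : (n : ZMod p) ≠ 0 := by
  rw [Ne, ZMod.natCast_eq_zero_iff]
  exact Nat.not_dvd_of_pos_of_lt hn hnp

lemma foldSum_three_disjoint {p : ℕ} {A : Finset (ZMod p)} (hA : KLSumFree 3 1 A)
    {x y z w : ZMod p} (hx : x ∈ A) (hy : y ∈ A) (hz : z ∈ A) (hw : w ∈ A) : x + y + z ≠ w := by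
  rintro rfl
  refine Finset.disjoint_left.1 hA ?_ ((foldSum_one A).symm ▸ hw)
  rw [show (3 : ℕ) = 1 + 1 + 1 from rfl, foldSum_add, foldSum_add, foldSum_one]
  exact Finset.add_mem_add (Finset.add_mem_add hx hy) hz

/-- The three-element case: for `k ≥ 4` the bound `#(3A) ≤ 9` makes `A` a copy of `{0, 2, 3}`,
whose `k`-fold sumset is too small; for `k = 3` the modulus is `13`. -/
lemma false_of_card_eq_three {p k : ℕ} [Fact p.Prime] {A : Finset (ZMod p)} (hk3 : 3 ≤ k)
    (hA : KLSumFree k 1 A) (hA3 : #A = 3) (hp : p = (k + 1) * #A + 1)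
    (h : ∀ d : ZMod p, d ≠ 0 → #(A ∩ (d +ᵥ A)) + 2 ≤ #A)
    (hkA : k * #A + 1 ≤ #(foldSum k A)) (h3A : 4 ≤ k → #(A + A + A) ≤ 3 * #A) : False := by
  obtain ⟨a, b, c, hab, hac, hbc, hAe⟩ := Finset.card_eq_three.1 hA3
  have ha : a ∈ A := by simp [hAe]
  have hb : b ∈ A := by simp [hAe]
  have hc : c ∈ A := by simp [hAe]
  have ea := two_mul_ne_of_overlap hA3 h hb ha hc hab.symm hac
  have eb := two_mul_ne_of_overlap hA3 h ha hb hc hab hbc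
  have ec := two_mul_ne_of_overlap hA3 h ha hc hb hac hbc.symm
  rw [hA3] at hp hkA
  rcases Nat.lt_or_ge k 4 with hk | hk
  · obtain rfl : k = 3 := by omega
    obtain rfl : p = 13 := by omega
    have key := fun {x y z w : ZMod 13} => foldSum_three_disjoint (x := x) (y := y) (z := z)
      (w := w) hA
    have r3 : ∀ {x w}, x ∈ A → w ∈ A → 3 * x ≠ w := fun {x w} hx hw he =>
      key hx hx hx hw (by linear_combination he)
    have r2 : ∀ {x y w}, x ∈ A → y ∈ A → w ∈ A → 2 * x + y ≠ w := fun {x y w} hx hy hw he =>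
      key hx hx hy hw (by linear_combination he)
    have r1 : ∀ {x y}, x ∈ A → y ∈ A → x + y ≠ 0 := fun {x y} hx hy he =>
      key hx hy hx hx (by linear_combination he)
    have r0 : ∀ {x}, x ∈ A → x ≠ 0 := fun {x} hx he =>
      key hx hx hx hx (by linear_combination 2 * he)
    rcases zmod13_aux a b c hab hac hbc (r3 ha hb) (r3 ha hc) (r3 hb ha) (r3 hb hc) (r3 hc ha)
      (r3 hc hb) (r2 ha hb hc) (r2 ha hc hb) (r2 hb ha hc) (r2 hb hc ha) (r2 hc ha hb)
      (r2 hc hb ha) (r1 ha hb) (r1 ha hc) (r1 hb hc) (r0 ha) (r0 hb) (r0 hc) with e | e | e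
    · exact ea e
    · exact eb e
    · exact ec e
  · have h2 : (2 : ZMod p) ≠ 0 := by
      exact_mod_cast natCast_ne_zero_of_lt (p := p) (n := 2) (by omega) (by omega)
    have h3 : (3 : ZMod p) ≠ 0 := by
      exact_mod_cast natCast_ne_zero_of_lt (p := p) (n := 3) (by omega) (by omega)
    have h9 := h3A hk
    rw [hA3, hAe] at h9
    obtain ⟨α, d, -, he⟩ := eq_of_card_triple_le h2 h3 hab hac hbc ea eb ec h9
    have h10 := card_foldSum_le α d k (by omega)
    rw [hAe, he] at hkA
    omega

theorem stmt17 (p k l : ℕ) (hp : p.Prime) (hl : 0 < l) (hkl : l < k) (hk3 : 3 ≤ k)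
    (hpd : ¬ p ∣ k - l) (A : Finset (ZMod p)) (hA : KLSumFree k l A)
    (hcard : A.card = cdiv (p - 1) (k + l)) :
    ∃ a b : ZMod p, A = apSet p a b A.card := by
  have : Fact p.Prime := ⟨hp⟩
  have hle : p ≤ (k + l) * #A + 1 := by
    have h1 := Nat.div_add_mod (p - 1 + (k + l) - 1) (k + l)
    have h2 := Nat.mod_lt (p - 1 + (k + l) - 1) (show 0 < k + l by omega)
    rw [cdiv] at hcard
    rw [← hcard] at h1
    omega
  rcases Nat.lt_or_ge #A 3 with hlt | hm
  · exact eq_apSet_of_card_le_two (by omega)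
  by_contra hap
  have hAn : A.Nonempty := Finset.card_pos.1 (by omega)
  have huniv : A ≠ univ := by
    intro hu
    have h1 := hA.card_add_card_le (i := k) (j := 0) (u := 0) (v := l) (by omega) (by omega)
    have h2 : 0 < #(mixSum A 0 l) := Finset.card_pos.2 (mixSum_nonempty hAn _ _)
    have h3 : #A ≤ #(mixSum A k 0) := by
      rw [mixSum_zero_right, show k = 1 + (k - 1) by omega, foldSum_add, foldSum_one]
      exact card_le_add_right (foldSum_nonempty hAn _)
    have h4 : #A = p := by rw [hu, Finset.card_univ, ZMod.card]
    omega
  have h : ∀ d : ZMod p, d ≠ 0 → #(A ∩ (d +ᵥ A)) + 2 ≤ #A := by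
    intro d hd
    by_contra hlt
    exact hap (eq_apSet hd huniv hAn (by omega))
  obtain ⟨hpe, rfl, hsub, hadd, hcov, hkA, h3A⟩ :=
    extremal_structure hl hkl hk3 hA hm hle (sumGap_one hAn h)
  rcases Nat.lt_or_ge #A 4 with hlt | hm4
  · exact false_of_card_eq_three hk3 hA (by omega) hpe h hkA h3A
  · refine false_of_four_le_card hm4 ?_ h hsub hadd hcov
    have := Nat.mul_le_mul_right #A (show 4 ≤ k + 1 by omega)
    omega
end

section
/- Let p be a prime and let m be an integer with ⌈(p−1)/3⌉ + 1 ≤ m ≤ p, and let A(p,m) = {⌈(p−m)/2⌉ + i : i = 0, 1, ..., m−1} ⊆ Z_p. Then the number of pairs (a_1, a_2) ∈ A(p,m)² with a_1 + a_2 ∈ A(p,m) equals ⌊(3m−p)²/4⌋. -/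
/-!
Write `c = ⌈(p - m) / 2⌉`, so that the elements of `A(p,m)` are the residues of `c + i` with
`0 ≤ i < m`. The sum of `c + i` and `c + j` lies in `A(p,m)` iff the residue of `c + i + j`
modulo `p` is less than `m`. Since `c + i + j < p + m`, this happens exactly when
`i + j < m - c` or `p - c ≤ i + j`. In the square `[0, m)²` the pairs of the first kind form a
triangle of side `N = m - c`, and those of the second kind become, under
`(i, j) ↦ (m - 1 - i, m - 1 - j)`, a triangle of side `M = 2 * m - 1 - p + c`
(`two_mul_card_triangle`). If `p - m` is even then `M = N - 1`, `2 * N = 3 * m - p`, and the total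
is `N ^ 2`; if it is odd then `M = N`, `2 * N + 1 = 3 * m - p`, and the total is `N * (N + 1)`.
In both cases this is `⌊(3 * m - p) ^ 2 / 4⌋`.
-/

open Finset Pointwise

/-- The set `A(p,m)`: the "middle" `m` elements of `ZMod p`. -/
def Apm (p m : ℕ) : Finset (ZMod p) :=
  (Finset.range m).image (fun i : ℕ => ((cdiv (p - m) 2 : ℕ) : ZMod p) + (i : ZMod p))

lemma two_mul_sum_tsub (N : ℕ) : ∀ m, N ≤ m → 2 * ∑ i ∈ range m, (N - i) = N * (N + 1) := by
  induction N with
  | zero => intro m _; simp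
  | succ n ih =>
    intro m hm
    obtain ⟨k, rfl⟩ : ∃ k, m = k + 1 := ⟨m - 1, by omega⟩
    have h := ih k (by omega)
    rw [Finset.sum_range_succ']
    simp only [Nat.add_sub_add_right, Nat.sub_zero, mul_add, h]
    ring

lemma two_mul_card_triangle (N m : ℕ) (h : N ≤ m) :
    2 * ((range m ×ˢ range m).filter (fun x => x.1 + x.2 < N)).card = N * (N + 1) := by
  rw [← two_mul_sum_tsub N m h, Finset.card_filter, Finset.sum_product]
  congr 1
  refine Finset.sum_congr rfl fun i _ => ?_
  rw [← Finset.card_filter]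
  have : (range m).filter (fun j => i + j < N) = range (N - i) := by
    ext j
    simp only [Finset.mem_filter, Finset.mem_range]
    omega
  rw [this, Finset.card_range]

/-- The corner of the square `[0, m)²` opposite to the origin: the point reflection
`(i, j) ↦ (m - 1 - i, m - 1 - j)` turns it into the triangle of side `M`. -/
lemma two_mul_card_corner (M m t : ℕ) (h : M ≤ m) (ht : M + t + 1 = 2 * m) :
    2 * ((range m ×ˢ range m).filter (fun x => t ≤ x.1 + x.2)).card = M * (M + 1) := by
  rw [← two_mul_card_triangle M m h]
  congr 1
  refine Finset.card_nbij' (fun x => (m - 1 - x.1, m - 1 - x.2))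
    (fun x => (m - 1 - x.1, m - 1 - x.2)) ?_ ?_ ?_ ?_ <;>
  · rintro ⟨i, j⟩ hx
    simp only [Finset.coe_filter, Finset.mem_product, Finset.mem_range, Set.mem_ofPred_eq,
      Prod.mk.injEq] at hx ⊢
    omega

lemma natCast_add_inj_of_lt {p c i j : ℕ} (hi : i < p) (hj : j < p)
    (h : (c : ZMod p) + i = c + j) : i = j := by
  have h' := (ZMod.natCast_eq_natCast_iff' i j p).1 (add_left_cancel h)
  rwa [Nat.mod_eq_of_lt hi, Nat.mod_eq_of_lt hj] at h'

/-- There is at most one wrap-around modulo `p`, because `c + i + j < p + m`. -/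
lemma add_mem_Apm_iff {p m i j : ℕ} (h2 : m ≤ p) (hi : i < m) (hj : j < m) :
    ((cdiv (p - m) 2 : ℕ) : ZMod p) + i + ((cdiv (p - m) 2 : ℕ) + j) ∈ Apm p m ↔
      i + j < m - cdiv (p - m) 2 ∨ p - cdiv (p - m) 2 ≤ i + j := by
  have hc : cdiv (p - m) 2 = (p - m + 1) / 2 := rfl
  unfold Apm
  generalize cdiv (p - m) 2 = c at hc ⊢
  have key : ((c : ZMod p) + i + (c + j) ∈
      (range m).image (fun k : ℕ => (c : ZMod p) + (k : ZMod p))) ↔ (c + i + j) % p < m := by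
    simp only [Finset.mem_image, Finset.mem_range]
    have e : (c : ZMod p) + i + (c + j) = c + ((c + i + j : ℕ) : ZMod p) := by
      push_cast; ring
    rw [e]
    constructor
    · rintro ⟨k, hk, hke⟩
      have := (ZMod.natCast_eq_natCast_iff' k _ p).1 (add_left_cancel hke)
      rwa [← this, Nat.mod_eq_of_lt (by omega)]
    · intro h
      exact ⟨_, h, by rw [ZMod.natCast_mod]⟩
  rw [key]
  rcases lt_or_ge (c + i + j) p with h | h
  · rw [Nat.mod_eq_of_lt h]
    omega
  · rw [Nat.mod_eq_sub_mod h, Nat.mod_eq_of_lt (by omega)]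
    omega

theorem stmt18 (p m : ℕ) (hp : p.Prime) (h1 : cdiv (p - 1) 3 + 1 ≤ m) (h2 : m ≤ p) :
    (((Apm p m) ×ˢ (Apm p m)).filter (fun x => x.1 + x.2 ∈ Apm p m)).card =
      (3 * m - p) ^ 2 / 4 := by
  have hp0 := hp.pos
  have hm : p + 2 ≤ 3 * m := by
    unfold cdiv at h1
    omega
  have hc : cdiv (p - m) 2 = (p - m + 1) / 2 := rfl
  have hcount : (((Apm p m) ×ˢ (Apm p m)).filter (fun x => x.1 + x.2 ∈ Apm p m)).card =
      ((range m ×ˢ range m).filter (fun x : ℕ × ℕ =>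
        x.1 + x.2 < m - cdiv (p - m) 2 ∨ p - cdiv (p - m) 2 ≤ x.1 + x.2)).card := by
    symm
    refine Finset.card_bij (fun x _ => (((cdiv (p - m) 2 : ℕ) : ZMod p) + (x.1 : ZMod p),
      ((cdiv (p - m) 2 : ℕ) : ZMod p) + (x.2 : ZMod p))) ?_ ?_ ?_
    · rintro ⟨i, j⟩ hx
      simp only [Finset.mem_filter, Finset.mem_product, Finset.mem_range] at hx ⊢
      exact ⟨⟨Finset.mem_image.2 ⟨i, Finset.mem_range.2 hx.1.1, rfl⟩,
        Finset.mem_image.2 ⟨j, Finset.mem_range.2 hx.1.2, rfl⟩⟩,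
        (add_mem_Apm_iff h2 hx.1.1 hx.1.2).2 hx.2⟩
    · rintro ⟨i, j⟩ hx ⟨i', j'⟩ hx' h
      simp only [Finset.mem_filter, Finset.mem_product, Finset.mem_range] at hx hx'
      obtain ⟨ha, hb⟩ := Prod.mk.inj h
      exact Prod.ext (natCast_add_inj_of_lt (by omega) (by omega) ha)
        (natCast_add_inj_of_lt (by omega) (by omega) hb)
    · rintro ⟨a, b⟩ hx
      simp only [Finset.mem_filter, Finset.mem_product] at hx
      obtain ⟨⟨ha, hb⟩, hab⟩ := hx
      obtain ⟨i, hi, rfl⟩ := Finset.mem_image.1 ha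
      obtain ⟨j, hj, rfl⟩ := Finset.mem_image.1 hb
      have hi' := Finset.mem_range.1 hi
      have hj' := Finset.mem_range.1 hj
      exact ⟨(i, j), Finset.mem_filter.2 ⟨Finset.mem_product.2 ⟨hi, hj⟩,
        (add_mem_Apm_iff h2 hi' hj').1 hab⟩, rfl⟩
  rw [hcount, Finset.filter_or, Finset.card_union_of_disjoint]
  · have hN := two_mul_card_triangle (m - cdiv (p - m) 2) m (Nat.sub_le _ _)
    have hM := two_mul_card_corner (2 * m - 1 - (p - cdiv (p - m) 2)) m (p - cdiv (p - m) 2)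
      (by omega) (by omega)
    rcases Nat.even_or_odd' (p - m) with ⟨q, hq | hq⟩
    · obtain ⟨n, hn⟩ : ∃ n, m = q + n + 1 := ⟨m - q - 1, by omega⟩
      have e1 : m - cdiv (p - m) 2 = n + 1 := by omega
      have e2 : 2 * m - 1 - (p - cdiv (p - m) 2) = n := by omega
      have e3 : 3 * m - p = 2 * (n + 1) := by omega
      rw [e1] at hN ⊢
      rw [e2] at hM
      have e4 : (2 * (n + 1)) ^ 2 = 4 * (n + 1) ^ 2 := by ring
      rw [e3, e4, Nat.mul_div_cancel_left _ (by norm_num)]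
      nlinarith
    · obtain ⟨n, hn⟩ : ∃ n, m = q + n + 1 := ⟨m - q - 1, by omega⟩
      have e1 : m - cdiv (p - m) 2 = n := by omega
      have e2 : 2 * m - 1 - (p - cdiv (p - m) 2) = n := by omega
      have e3 : 3 * m - p = 2 * n + 1 := by omega
      rw [e1] at hN ⊢
      rw [e2] at hM
      have e4 : (2 * n + 1) ^ 2 = 4 * (n * (n + 1)) + 1 := by ring
      rw [e3, e4]
      omega
  · rw [Finset.disjoint_filter]
    intro x _ h h'
    omega
end

section
/- Let p be a prime and let m be an integer with ⌈(p−1)/3⌉ + 1 ≤ m ≤ p. Then the minimum over all m-element subsets A of Z_p of the number of pairs (a_1, a_2) ∈ A² with a_1 + a_2 ∈ A equals ⌊(3m−p)²/4⌋. Furthermore, if an m-element subset A of Z_p attains this minimum, then there is an element b ∈ Z_p with A = b · A(p,m), where A(p,m) = {⌈(p−m)/2⌉ + i : i = 0, 1, ..., m−1} and b · S denotes the dilation {b·s : s ∈ S}. -/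
/-!
Passing to the complement `C = Aᶜ`, of size `c = p - m`, inclusion–exclusion (`pairCount_compl`)
shows that `pairCount A + pairCount C` depends only on `p` and `c`, so the task is to maximise the
number of Schur triples in `C`.

For a translation `x` let `defect C x = #{y ∈ C | y + x ∉ C}`. It vanishes at `0`, is even and
subadditive, and `pairCount C = ∑ x ∈ C, (c - defect C x)`. Pollard's theorem (`pollard`), applied
to `C` and `-C`, says `∑ x, (j - defect C x)⁺ ≤ j²` whenever `j ≤ c` and `c + j ≤ p`. Taking
`j = ⌈c / 2⌉` gives the upper bound for `pairCount C`, and `A(p,m)` attains it by a direct count.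

For uniqueness write `⌈c / 2⌉ = T + 1`, `D i = {x | defect C x ≤ i}` and `f i = #(D i)`. If `C` is
extremal, then `D T ⊆ C ⊆ D (T + 1)` and `f 0 + ⋯ + f T = (T + 1)²`; Pollard's theorem at the
neighbouring values `T` and `T + 2`, with the oddness of `f T`, yields `f T = 2T + 1` and
`f (T + 1) ≤ 2T + 3`. As `D i + D (T - i) ⊆ D T`, Cauchy–Davenport gives
`f i + f (T - i) ≤ 2T + 2`, and summing over `i` forces equality throughout. Let `D v` be the first
level different from `{0}`, and `0 ≠ a ∈ D v`. Equality for `i = v - 1` gives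
`D (T + 1 - v) = D T`, hence `D T ± a ⊆ D (T + 1)`, which exceeds `D T` by at most two elements.
This makes `D T` the progression `-T a, …, T a` and `D (T + 1)` the next larger one
(`exists_difference`), so `C`, which lies between them, is determined up to dilation.
-/

open Finset Pointwise

/-- `P(ZMod p, 2, A)`: the number of pairs `(a₁, a₂) ∈ A²` with `a₁ + a₂ ∈ A`. -/
def pairCount {p : ℕ} (A : Finset (ZMod p)) : ℕ :=
  ((A ×ˢ A).filter (fun x => x.1 + x.2 ∈ A)).card

/-! ### Pollard’s theorem -/

/-- The number of representations `x = a + b` with `a ∈ A` and `b ∈ B`, counted through `b`. -/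
def rep {p : ℕ} (A B : Finset (ZMod p)) (x : ZMod p) : ℕ := #{b ∈ B | x - b ∈ A}

lemma rep_le {p : ℕ} (A B : Finset (ZMod p)) (x : ZMod p) : rep A B x ≤ #B :=
  card_filter_le _ _

section Pollard

variable {p : ℕ} [Fact p.Prime]

lemma eq_univ_of_add_closed {A : Finset (ZMod p)} (hA : A.Nonempty) {a : ZMod p} (ha : a ≠ 0)
    (h : ∀ x ∈ A, x + a ∈ A) : A = univ := by
  obtain ⟨x₀, hx₀⟩ := hA
  have key : ∀ k : ℕ, x₀ + k * a ∈ A := by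
    intro k
    induction k with
    | zero => simpa using hx₀
    | succ k ih =>
      have := h _ ih
      push_cast
      rwa [add_mul, one_mul, ← add_assoc]
  ext y
  simp only [mem_univ, iff_true]
  have := key ((y - x₀) / a).val
  rw [ZMod.natCast_zmod_val, div_mul_cancel₀ _ ha] at this
  simpa using this

lemma rep_eq_sum (A B : Finset (ZMod p)) (x : ZMod p) :
    rep A B x = ∑ y : ZMod p, (if y ∈ B then 1 else 0) * (if x - y ∈ A then 1 else 0) := by
  unfold rep
  rw [card_filter]
  simp only [ite_mul, one_mul, zero_mul, Finset.sum_ite_mem, univ_inter]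

/-- The union/intersection transform splits the representation function. -/
lemma rep_split (A B : Finset (ZMod p)) (x : ZMod p) :
    rep A B x = rep (A ∪ B) (A ∩ B) x + rep (A \ B) (B \ A) x := by
  have hflip : ∑ y : ZMod p, (if y ∈ B \ A then 1 else 0) * (if x - y ∈ A ∩ B then 1 else 0)
      = ∑ y : ZMod p, (if y ∈ A ∩ B then 1 else 0) * (if x - y ∈ B \ A then 1 else 0) := by
    refine Fintype.sum_equiv (Equiv.subLeft x) _ _ fun y => ?_
    simp [mul_comm]
  have h1 : rep A B x =
      ∑ y : ZMod p, (if y ∈ A ∩ B then 1 else 0) * (if x - y ∈ A then 1 else 0)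
      + (∑ y : ZMod p, (if y ∈ B \ A then 1 else 0) * (if x - y ∈ A ∩ B then 1 else 0)
      + ∑ y : ZMod p, (if y ∈ B \ A then 1 else 0) * (if x - y ∈ A \ B then 1 else 0)) := by
    rw [rep_eq_sum, ← sum_add_distrib, ← sum_add_distrib]
    refine sum_congr rfl fun y _ => ?_
    simp only [mem_inter, mem_sdiff]
    by_cases h1 : y ∈ A <;> by_cases h2 : y ∈ B <;> by_cases h3 : x - y ∈ A <;>
      by_cases h4 : x - y ∈ B <;> simp [h1, h2, h3, h4]
  rw [h1, hflip, ← add_assoc, ← sum_add_distrib, rep_eq_sum, rep_eq_sum]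
  congr 1
  refine sum_congr rfl fun y _ => ?_
  simp only [mem_inter, mem_sdiff, mem_union]
  by_cases h1 : y ∈ A <;> by_cases h2 : y ∈ B <;> by_cases h3 : x - y ∈ A <;>
    by_cases h4 : x - y ∈ B <;> simp [h1, h2, h3, h4]

lemma sum_rep (A B : Finset (ZMod p)) : ∑ x, rep A B x = #A * #B := by
  simp_rw [rep_eq_sum]
  rw [sum_comm]
  have : ∀ y : ZMod p, ∑ x : ZMod p, (if x - y ∈ A then 1 else 0) = #A := by
    intro y
    rw [Fintype.sum_equiv (Equiv.subRight y) _ (fun x => if x ∈ A then 1 else 0) (by simp)]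
    simp
  simp_rw [← mul_sum, this, ← sum_mul]
  simp [mul_comm]

lemma rep_translate (A B : Finset (ZMod p)) (e x : ZMod p) :
    rep A (B.map (Equiv.addRight e).toEmbedding) (x + e) = rep A B x := by
  rw [rep_eq_sum, rep_eq_sum]
  symm
  refine Fintype.sum_equiv (Equiv.addRight e) _ _ fun y => ?_
  simp [mem_map_equiv]

/-- **Pollard's theorem** in `ZMod p`, in the range where the lower bound does not exceed `t * p`. -/
lemma pollard (n : ℕ) : ∀ (A B : Finset (ZMod p)) (t : ℕ), #B = n → t ≤ #A → t ≤ #B →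
    #A + #B ≤ p + t → t * (#A + #B) ≤ ∑ x, min t (rep A B x) + t * t := by
  induction n using Nat.strong_induction_on with
  | _ n ih =>
  intro A B t hn htA htB hp
  rcases Nat.eq_zero_or_pos t with rfl | ht0
  · simp
  -- if `t = #B`, then `rep ≤ #B = t`, so the truncation is vacuous
  rcases htB.eq_or_lt with htlt | htlt
  · have : ∀ x, min t (rep A B x) = rep A B x := fun x =>
      min_eq_right (htlt ▸ rep_le A B x)
    simp_rw [this, sum_rep, htlt]
    apply le_of_eq; ring
  -- a translate of `B` that meets `A` but is not contained in it
  obtain ⟨e, ⟨b₁, hb₁, hb₁A⟩, b₂, hb₂, hb₂A⟩ :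
      ∃ e, (∃ b ∈ B, b + e ∈ A) ∧ ∃ b ∈ B, b + e ∉ A := by
    by_contra hcon
    push Not at hcon
    obtain ⟨b₁, hb₁, b₂, hb₂, hne⟩ := one_lt_card.1 (lt_of_le_of_lt ht0 htlt)
    have hA : A = univ := by
      refine eq_univ_of_add_closed (card_pos.1 (by omega)) (sub_ne_zero.2 hne.symm) fun x hx => ?_
      have := hcon (x - b₁) ⟨b₁, hb₁, by simpa using hx⟩ b₂ hb₂
      rwa [show x + (b₂ - b₁) = b₂ + (x - b₁) by ring]
    rw [hA, card_univ, ZMod.card] at hp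
    omega
  set B' := B.map (Equiv.addRight e).toEmbedding with hB'
  have hcB : #B' = #B := card_map _
  have hsum : ∑ x, min t (rep A B x) = ∑ x, min t (rep A B' x) := by
    refine Fintype.sum_equiv (Equiv.addRight e) _ _ fun x => ?_
    simp [hB', rep_translate]
  have hmem : ∀ b ∈ B, b + e ∈ B' := fun b hb => by simpa [hB', mem_map_equiv] using hb
  have hpos : 0 < #(A ∩ B') := card_pos.2 ⟨b₁ + e, by simp [hb₁A, hmem b₁ hb₁]⟩
  have hpos' : 0 < #(B' \ A) := card_pos.2 ⟨b₂ + e, by simp [hb₂A, hmem b₂ hb₂]⟩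
  have hu := card_union_add_card_inter A B'
  have hd1 := card_sdiff_add_card_inter A B'
  have hd2 := card_sdiff_add_card_inter B' A
  rw [inter_comm B' A] at hd2
  rw [hsum, ← hcB]
  rcases le_or_gt t #(A ∩ B') with hs | hs
  · have := ih #(A ∩ B') (by omega) (A ∪ B') (A ∩ B') t rfl (by omega) hs (by omega)
    rw [hu] at this
    refine this.trans (Nat.add_le_add_right (sum_le_sum fun x _ => ?_) _)
    rw [rep_split A B' x]
    omega
  · set s := #(A ∩ B') with hs'
    have h2 := ih #(B' \ A) (by omega) (A \ B') (B' \ A) (t - s) rfl (by omega) (by omega) (by omega)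
    have h1 : ∑ x, rep (A ∪ B') (A ∩ B') x = #(A ∪ B') * s := sum_rep _ _
    have h3 : ∑ x, rep (A ∪ B') (A ∩ B') x + ∑ x, min (t - s) (rep (A \ B') (B' \ A) x)
        ≤ ∑ x, min t (rep A B' x) := by
      rw [← sum_add_distrib]
      refine sum_le_sum fun x _ => ?_
      have := rep_le (A ∪ B') (A ∩ B') x
      rw [rep_split A B' x]
      omega
    obtain ⟨w, rfl⟩ : ∃ w, t = s + w := ⟨t - s, by omega⟩
    rw [Nat.add_sub_cancel_left] at *
    have e1 : #A = #(A \ B') + s := hd1.symm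
    have e2 : #B' = #(B' \ A) + s := hd2.symm
    have e3 : #(A ∪ B') = #(A \ B') + #(B' \ A) + s := by omega
    rw [e3] at h1
    rw [e1, e2]
    nlinarith

end Pollard

/-! ### Defects of translations and their level sets -/

/-- `agree C x` counts the `y ∈ C` whose translate `y + x` stays in `C`. -/
def agree {p : ℕ} (C : Finset (ZMod p)) (x : ZMod p) : ℕ := #{y ∈ C | y + x ∈ C}

/-- `defect C x` counts the `y ∈ C` whose translate `y + x` leaves `C`. -/
def defect {p : ℕ} (C : Finset (ZMod p)) (x : ZMod p) : ℕ := #{y ∈ C | y + x ∉ C}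

section Defect

variable {p : ℕ} (C : Finset (ZMod p))

lemma agree_add_defect (x : ZMod p) : agree C x + defect C x = #C :=
  card_filter_add_card_filter_not _

lemma defect_zero : defect C 0 = 0 := by simp [defect]

lemma defect_neg (x : ZMod p) : defect C (-x) = defect C x := by
  have h : agree C (-x) = agree C x := by
    refine card_bij' (fun y _ => y - x) (fun y _ => y + x) ?_ ?_ ?_ ?_ <;>
      simp +contextual [sub_eq_add_neg]
  have h1 := agree_add_defect C x
  have h2 := agree_add_defect C (-x)
  omega

lemma defect_add_le (x z : ZMod p) : defect C (x + z) ≤ defect C x + defect C z := by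
  have h1 : #{y ∈ C | y + x ∈ C ∧ y + x + z ∉ C} ≤ defect C z := by
    refine card_le_card_of_injOn (· + x) ?_ ((add_left_injective x).injOn)
    intro y hy
    simp only [coe_filter, Set.mem_ofPred_eq] at hy
    simp [hy.2.1, hy.2.2]
  refine le_trans ?_ (Nat.add_le_add_left h1 _)
  refine le_trans (card_le_card ?_) (card_union_le _ _)
  intro y
  simp only [mem_filter, mem_union, ← add_assoc]
  tauto

variable [Fact p.Prime]

/-- The elements of defect at most `i`: the neighbourhoods of `0` for the norm `defect C`. -/
def level (i : ℕ) : Finset (ZMod p) := {x | defect C x ≤ i}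

lemma mem_level {i : ℕ} {x : ZMod p} : x ∈ level C i ↔ defect C x ≤ i := by simp [level]

lemma zero_mem_level (i : ℕ) : (0 : ZMod p) ∈ level C i := by simp [mem_level, defect_zero]

lemma neg_mem_level {i : ℕ} {x : ZMod p} (h : x ∈ level C i) : -x ∈ level C i := by
  rwa [mem_level, defect_neg, ← mem_level]

lemma add_mem_level {i j : ℕ} {x y : ZMod p} (hx : x ∈ level C i) (hy : y ∈ level C j) :
    x + y ∈ level C (i + j) := by
  rw [mem_level] at *
  exact (defect_add_le C x y).trans (add_le_add hx hy)

lemma level_mono {i j : ℕ} (h : i ≤ j) : level C i ⊆ level C j := fun x hx => by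
  rw [mem_level] at *
  exact hx.trans h

/-- Pollard's theorem for `C` and `-C`, in terms of defects. -/
lemma sum_defect_le {j : ℕ} (hj : j ≤ #C) (hp : #C + j ≤ p) :
    ∑ x, (j - defect C x) ≤ j ^ 2 := by
  have hrep : ∀ x, rep C (-C) x = agree C x := by
    intro x
    refine card_bij' (fun y _ => -y) (fun y _ => -y) ?_ ?_ ?_ ?_ <;>
      simp +contextual [sub_eq_add_neg, add_comm]
  have h1 := pollard #C C (-C) (#C - j) (by simp) (by simp) (by simp) (by simp; omega)
  have h2 := sum_rep C (-C)
  simp_rw [hrep] at h1 h2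
  have h3 : ∑ x, agree C x = ∑ x, min (#C - j) (agree C x) + ∑ x, (j - defect C x) := by
    rw [← sum_add_distrib]
    refine sum_congr rfl fun x _ => ?_
    have := agree_add_defect C x
    omega
  rw [card_neg] at h1 h2
  obtain ⟨s, hs⟩ := Nat.exists_eq_add_of_le hj
  rw [hs, Nat.add_sub_cancel_left] at h1 h3
  rw [hs] at h2
  nlinarith

/-- Summing the sizes of the levels counts each `x` with weight `j - defect C x`. -/
lemma sum_card_level (j : ℕ) : ∑ i ∈ range j, #(level C i) = ∑ x, (j - defect C x) := by
  simp_rw [level, card_filter]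
  rw [sum_comm]
  refine sum_congr rfl fun x _ => ?_
  rw [← card_filter, ← Nat.card_Ico]
  congr 1
  ext i
  simp
  tauto

/-- A symmetric set containing `0` has odd size when `p` is odd. -/
lemma odd_card_level (hp : p ≠ 2) (i : ℕ) : Odd #(level C i) := by
  have h : Even #((level C i).erase 0) := by
    rw [← ZMod.natCast_eq_zero_iff_even, card_eq_sum_ones, Nat.cast_sum]
    refine sum_involution (fun x _ => -x) (fun _ _ => by decide) (fun x hx _ hxx => ?_)
      (fun x hx => ?_) (fun x _ => neg_neg x)
    · rcases (ZMod.neg_eq_self_iff x).1 hxx with h0 | h2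
      · exact (mem_erase.1 hx).1 h0
      · have hodd := (Fact.out : p.Prime).odd_of_ne_two hp
        rw [← h2] at hodd
        exact (Nat.not_odd_iff_even.2 (even_two_mul _)) hodd
    · rw [mem_erase] at *
      exact ⟨neg_ne_zero.2 hx.1, neg_mem_level C hx.2⟩
  have := card_erase_add_one (zero_mem_level C i)
  rw [← this]
  exact h.add_one

/-- The Schur triples in `C`, sorted by one summand. -/
lemma pairCount_eq_sum : pairCount C = ∑ x ∈ C, agree C x := by
  unfold pairCount agree
  rw [card_filter, sum_product]
  refine sum_congr rfl fun x _ => ?_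
  rw [card_filter]
  simp_rw [add_comm]

lemma pairCount_le {j : ℕ} (hj : j ≤ #C) (hp : #C + j ≤ p) :
    pairCount C ≤ #C * (#C - j) + j ^ 2 ∧
    (pairCount C = #C * (#C - j) + j ^ 2 →
      ∑ x, (j - defect C x) = j ^ 2 ∧ (∀ x ∈ C, defect C x ≤ j) ∧ ∀ x ∉ C, j ≤ defect C x) := by
  have h0 := sum_defect_le C hj hp
  have hle : ∀ x ∈ C, agree C x ≤ (#C - j) + (j - defect C x) := fun x _ => by
    have := agree_add_defect C x
    omega
  have h1 := sum_le_sum hle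
  rw [← pairCount_eq_sum, sum_add_distrib, sum_const, smul_eq_mul] at h1
  have h2 := sum_add_sum_compl C (fun x => j - defect C x)
  refine ⟨by omega, fun heq => ?_⟩
  have h3 : ∑ x ∈ Cᶜ, (j - defect C x) = 0 := by omega
  refine ⟨by omega, ?_, ?_⟩
  · have h4 : ∑ x ∈ C, agree C x = ∑ x ∈ C, ((#C - j) + (j - defect C x)) := by
      rw [← pairCount_eq_sum, sum_add_distrib, sum_const, smul_eq_mul]
      omega
    intro x hx
    have h5 := (sum_eq_sum_iff_of_le hle).1 h4 x hx
    have := agree_add_defect C x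
    omega
  · intro x hx
    have := (sum_eq_zero_iff.1 h3) x (by simpa using hx)
    omega

/-- Inclusion–exclusion for Schur triples of a set and its complement. -/
lemma pairCount_compl :
    pairCount Cᶜ + pairCount C + 3 * p * #C = p ^ 2 + 3 * #C ^ 2 := by
  let f : ZMod p → ℤ := fun x => if x ∈ C then 1 else 0
  let g : ZMod p → ℤ := fun x => if x ∈ Cᶜ then 1 else 0
  have hg : ∀ x, g x = 1 - f x := fun x => by
    by_cases h : x ∈ C <;> simp [f, g, h]
  have hcount : ∀ S : Finset (ZMod p), (pairCount S : ℤ) = ∑ x, ∑ y,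
      (if x ∈ S then (1 : ℤ) else 0) * (if y ∈ S then 1 else 0) * (if x + y ∈ S then 1 else 0) := by
    intro S
    unfold pairCount
    rw [card_filter, sum_product]
    push_cast
    simp_rw [mul_assoc, ← mul_sum, ite_mul, one_mul, zero_mul, sum_ite_mem, univ_inter]
  have hC : ∑ x, f x = #C := by simp [f]
  have hC1 : ∀ x, ∑ y, f (x + y) = #C := fun x => by
    rw [← hC]; exact Fintype.sum_equiv (Equiv.addLeft x) _ _ (fun _ => rfl)
  have hC2 : ∀ y, ∑ x, f (x + y) = #C := fun y => by
    rw [← hC]; exact Fintype.sum_equiv (Equiv.addRight y) _ _ (fun _ => rfl)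
  have e1 : (pairCount Cᶜ : ℤ) = ∑ x, ∑ y, g x * g y * g (x + y) := hcount _
  have e2 : (pairCount C : ℤ) = ∑ x, ∑ y, f x * f y * f (x + y) := hcount _
  have a0 : ∑ _x : ZMod p, ∑ _y : ZMod p, (1 : ℤ) = p ^ 2 := by simp [ZMod.card, sq]
  have a1 : ∑ x : ZMod p, ∑ _y : ZMod p, f x = p * #C := by
    simp [ZMod.card, ← mul_sum, hC]
  have a2 : ∑ _x : ZMod p, ∑ y : ZMod p, f y = p * #C := by simp [ZMod.card, hC]
  have a3 : ∑ x : ZMod p, ∑ y : ZMod p, f (x + y) = p * #C := by simp [ZMod.card, hC1]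
  have a4 : ∑ x : ZMod p, ∑ y : ZMod p, f x * f y = (#C : ℤ) ^ 2 := by
    simp_rw [← mul_sum, hC, ← sum_mul, hC, sq]
  have a5 : ∑ x : ZMod p, ∑ y : ZMod p, f x * f (x + y) = (#C : ℤ) ^ 2 := by
    simp_rw [← mul_sum, hC1, ← sum_mul, hC, sq]
  have a6 : ∑ x : ZMod p, ∑ y : ZMod p, f y * f (x + y) = (#C : ℤ) ^ 2 := by
    rw [sum_comm]
    simp_rw [← mul_sum, hC2, ← sum_mul, hC, sq]
  have key : (pairCount Cᶜ : ℤ) + pairCount C + 3 * p * #C = p ^ 2 + 3 * #C ^ 2 := by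
    have : (pairCount Cᶜ : ℤ) = ∑ _x : ZMod p, ∑ _y : ZMod p, (1 : ℤ)
        - ∑ x : ZMod p, ∑ _y : ZMod p, f x - ∑ _x : ZMod p, ∑ y : ZMod p, f y
        - ∑ x : ZMod p, ∑ y : ZMod p, f (x + y) + ∑ x : ZMod p, ∑ y : ZMod p, f x * f y
        + ∑ x : ZMod p, ∑ y : ZMod p, f x * f (x + y)
        + ∑ x : ZMod p, ∑ y : ZMod p, f y * f (x + y) - pairCount C := by
      rw [e1, e2]
      simp_rw [← sum_sub_distrib, ← sum_add_distrib, ← sum_sub_distrib]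
      refine sum_congr rfl fun x _ => sum_congr rfl fun y _ => ?_
      rw [hg, hg, hg]; ring
    rw [this, a0, a1, a2, a3, a4, a5, a6]; ring
  exact_mod_cast key

end Defect

/-! ### Structure of extremal complements -/

section Structure

variable {p : ℕ} [Fact p.Prime]

/-- A proper subset that loses exactly one element under translation by `a` is an arithmetic
progression with difference `a`; here it is listed downwards from its last element `e`. -/
lemma exists_progression {E : Finset (ZMod p)} (hE : E ≠ univ) {a : ZMod p} (ha : a ≠ 0)
    (h1 : defect E a = 1) :
    ∃ e ∈ E, e + a ∉ E ∧ E = (range #E).image (fun k : ℕ => e - k * a) := by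
  obtain ⟨e, he⟩ := card_eq_one.1 h1
  have hiff : ∀ y, (y ∈ E ∧ y + a ∉ E) ↔ y = e := fun y => by
    rw [← mem_singleton, ← he, mem_filter]
  obtain ⟨heE, hea⟩ := (hiff e).2 rfl
  refine ⟨e, heE, hea, eq_of_subset_of_card_le ?_ ?_⟩
  swap
  · exact card_image_le.trans (by simp)
  intro y hy
  obtain ⟨z, hz⟩ : ∃ z, z ∉ E := by
    by_contra h
    push Not at h
    exact hE (eq_univ_iff_forall.2 h)
  have hz' : y + ((((z - y) / a).val : ℕ) : ZMod p) * a ∉ E := by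
    rw [ZMod.natCast_zmod_val, div_mul_cancel₀ _ ha]
    simpa using hz
  have hex : ∃ k : ℕ, y + (k : ZMod p) * a ∉ E := ⟨_, hz'⟩
  classical
  -- the first step at which the walk `y, y + a, y + 2a, …` leaves `E`
  obtain ⟨k, hk, hmin⟩ : ∃ k : ℕ, y + (k : ZMod p) * a ∉ E ∧ ∀ i < k, y + (i : ZMod p) * a ∈ E :=
    ⟨Nat.find hex, Nat.find_spec hex, fun i hi => not_not.1 (Nat.find_min hex hi)⟩
  have hkp : k < p := by
    by_contra hcon
    exact hz' (hmin _ (lt_of_lt_of_le (ZMod.val_lt _) (not_lt.1 hcon)))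
  have hkE : k ≤ #E := by
    rw [← card_range k]
    refine card_le_card_of_injOn (fun i : ℕ => y + (i : ZMod p) * a) ?_ ?_
    · intro i hi
      exact hmin i (by simpa using hi)
    · intro i hi j hj hij
      simp only [coe_range, Set.mem_Iio] at hi hj
      have hij' := mul_right_cancel₀ ha (add_left_cancel hij)
      rw [ZMod.natCast_eq_natCast_iff', Nat.mod_eq_of_lt (by omega),
        Nat.mod_eq_of_lt (by omega)] at hij'
      exact hij'
  rcases k with _ | j
  · simp [hy] at hk
  have hje : y + (j : ZMod p) * a = e := by
    refine (hiff _).1 ⟨hmin j (by omega), ?_⟩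
    convert hk using 2
    push_cast; ring
  refine mem_image.2 ⟨j, by simpa using hkE, ?_⟩
  rw [← hje]; ring

/-- A symmetric set of size `2T + 1` that loses one element under translation by `a` contains
`-T a, …, T a`. -/
lemma symm_progression {E : Finset (ZMod p)} (hp : p ≠ 2) (hE : E ≠ univ) {a : ZMod p}
    (ha : a ≠ 0) (h1 : defect E a = 1) (hsymm : ∀ x ∈ E, -x ∈ E) {T : ℕ} (hT : #E = 2 * T + 1)
    (l : ℤ) (hl1 : -(T : ℤ) ≤ l) (hl2 : l ≤ T) : (l : ZMod p) * a ∈ E := by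
  obtain ⟨e, heE, hea, hprog⟩ := exists_progression hE ha h1
  have hmem : ∀ k : ℕ, k ≤ 2 * T → e - (k : ZMod p) * a ∈ E := fun k hk => by
    rw [hprog]
    exact mem_image.2 ⟨k, by simp; omega, rfl⟩
  have hneg := hsymm e heE
  rw [hprog] at hneg
  obtain ⟨k, hk, hke⟩ := mem_image.1 hneg
  rw [mem_range, hT] at hk
  -- `-e` must be the first element of the progression, as `-e - a ∉ E`
  have hk2 : k = 2 * T := by
    by_contra hne
    have h := hsymm _ (hmem (k + 1) (by omega))
    apply hea
    convert h using 1
    push_cast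
    linear_combination hke
  have h2 : (2 : ZMod p) ≠ 0 := by
    intro h
    have := (ZMod.natCast_eq_zero_iff 2 p).1 (by exact_mod_cast h)
    exact hp ((Nat.prime_dvd_prime_iff_eq Fact.out Nat.prime_two).1 this)
  have he : e = T * a := by
    apply mul_left_cancel₀ h2
    rw [hk2] at hke
    push_cast at hke
    linear_combination hke
  have := hmem (T - l).toNat (by omega)
  convert this using 1
  have hc : (((T - l).toNat : ℕ) : ZMod p) = (T : ZMod p) - l := by
    have : (((T - l).toNat : ℤ) : ZMod p) = ((T - l : ℤ) : ZMod p) := by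
      rw [Int.toNat_of_nonneg (by omega)]
    push_cast at this
    exact_mod_cast this
  rw [hc, he]; ring

lemma intCast_mul_inj {a : ZMod p} (ha : a ≠ 0) {l l' : ℤ} (h : |l - l'| < p)
    (heq : (l : ZMod p) * a = l' * a) : l = l' := by
  have h1 := mul_right_cancel₀ ha heq
  have h2 : (p : ℤ) ∣ l - l' := by
    rw [← ZMod.intCast_zmod_eq_zero_iff_dvd]
    push_cast
    rw [h1, sub_self]
  have := Int.eq_zero_of_abs_lt_dvd h2 h
  omega

lemma card_intCast_image {a : ZMod p} (ha : a ≠ 0) {u v : ℤ} (h : v - u < p) :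
    #((Finset.Icc u v).image (fun l : ℤ => (l : ZMod p) * a)) = (v + 1 - u).toNat := by
  rw [card_image_of_injOn, Int.card_Icc]
  intro l hl l' hl' heq
  simp only [coe_Icc, Set.mem_Icc] at hl hl'
  exact intCast_mul_inj ha (abs_lt.2 ⟨by omega, by omega⟩) heq

/-- Extremality forces `C` to lie between `{l a : |l| ≤ T}` and `{l a : |l| ≤ T + 1}`.
The level sizes satisfy `f 0 + ⋯ + f T = (T + 1)²` and `f T = 2T + 1`, while Cauchy–Davenport
gives `f i + f (T - i) ≤ 2T + 2`; summing, all of these are equalities. If `v` is the first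
index with `f v ≠ 1`, then `f (T + 1 - v) = f T`, so every `a ∈ level v` translates `level T` into
`level (T + 1)`, which has only two more elements. -/
lemma exists_difference (C : Finset (ZMod p)) {T : ℕ} (hT : 1 ≤ T) (hc1 : 2 * T + 1 ≤ #C)
    (hc2 : #C ≤ 2 * T + 2) (hp : #C + (T + 2) ≤ p)
    (hsum : ∑ x, (T + 1 - defect C x) = (T + 1) ^ 2)
    (hin : ∀ x ∈ C, defect C x ≤ T + 1) (hout : ∀ x ∉ C, T + 1 ≤ defect C x) :
    ∃ a : ZMod p, a ≠ 0 ∧ (∀ l : ℤ, -(T : ℤ) ≤ l → l ≤ T → (l : ZMod p) * a ∈ C) ∧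
      ∀ x ∈ C, ∃ l : ℤ, -(T + 1 : ℤ) ≤ l ∧ l ≤ T + 1 ∧ x = l * a := by
  have hp2 : p ≠ 2 := by omega
  set f : ℕ → ℕ := fun i => #(level C i) with hf
  have hEC : level C T ⊆ C := fun x hx => by
    by_contra h
    have := hout x h
    rw [mem_level] at hx
    omega
  have hCD : C ⊆ level C (T + 1) := fun x hx => (mem_level C).2 (hin x hx)
  have hF1 : ∑ i ∈ range (T + 1), f i = (T + 1) ^ 2 := by rw [hf, sum_card_level, hsum]
  have hF0 : ∑ i ∈ range T, f i ≤ T ^ 2 := by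
    rw [hf, sum_card_level]; exact sum_defect_le C (by omega) (by omega)
  have hF2 : ∑ i ∈ range (T + 2), f i ≤ (T + 2) ^ 2 := by
    rw [hf, sum_card_level]; exact sum_defect_le C (by omega) (by omega)
  have hf0 : f 0 ≤ 1 := by
    have := sum_defect_le C (j := 1) (by omega) (by omega)
    rw [← sum_card_level] at this
    simpa [hf] using this
  have hfpos : ∀ i, 1 ≤ f i := fun i => card_pos.2 ⟨0, zero_mem_level C i⟩
  have hfT : f T = 2 * T + 1 := by
    have h1 : f T ≤ #C := card_le_card hEC
    have h2 : 2 * T + 1 ≤ f T := by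
      rw [sum_range_succ] at hF1
      nlinarith
    obtain ⟨k, hk⟩ : Odd (f T) := odd_card_level C hp2 T
    omega
  have hfT1 : f (T + 1) ≤ 2 * T + 3 := by
    rw [sum_range_succ] at hF2
    nlinarith
  have hpair : ∀ i ∈ range (T + 1), f i + f (T - i) ≤ 2 * T + 2 := by
    intro i hi
    rw [mem_range] at hi
    have hcd := ZMod.cauchy_davenport (Fact.out : p.Prime) (s := level C i) (t := level C (T - i))
      ⟨0, zero_mem_level C _⟩ ⟨0, zero_mem_level C _⟩
    have hsub : level C i + level C (T - i) ⊆ level C T := by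
      intro z hz
      obtain ⟨x, hx, y, hy, rfl⟩ := mem_add.1 hz
      have := add_mem_level C hx hy
      rwa [Nat.add_sub_cancel' (by omega)] at this
    have := hcd.trans (card_le_card hsub)
    change min p (f i + f (T - i) - 1) ≤ f T at this
    omega
  have hpair_eq : ∀ i ∈ range (T + 1), f i + f (T - i) = 2 * T + 2 := by
    refine (sum_eq_sum_iff_of_le hpair).1 ?_
    have hrefl : ∑ i ∈ range (T + 1), f (T - i) = ∑ i ∈ range (T + 1), f i := by
      simpa using sum_range_reflect f (T + 1)
    rw [sum_add_distrib, hrefl, hF1]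
    simp
    ring
  -- the first nontrivial level
  have hex : ∃ v, f v ≠ 1 := ⟨T, by omega⟩
  obtain ⟨v, hv, hvmin⟩ : ∃ v, f v ≠ 1 ∧ ∀ i < v, f i = 1 :=
    ⟨Nat.find hex, Nat.find_spec hex, fun i hi => not_not.1 (Nat.find_min hex hi)⟩
  have hvT : v ≤ T := by
    by_contra h
    have := hvmin T (by omega)
    omega
  have hv1 : 1 ≤ v := by
    by_contra h
    have h0 : v = 0 := by omega
    have := hfpos 0
    rw [h0] at hv
    omega
  have hlev : level C (T - (v - 1)) = level C T := by
    refine eq_of_subset_of_card_le (level_mono C (by omega)) ?_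
    have h1 := hpair_eq (v - 1) (by rw [mem_range]; omega)
    have h2 := hvmin (v - 1) (by omega)
    change f T ≤ f (T - (v - 1))
    omega
  obtain ⟨a, hav, ha⟩ : ∃ a ∈ level C v, a ≠ 0 := by
    have := hfpos v
    exact exists_mem_ne (by change 1 < f v; omega) 0
  set E := level C T with hEdef
  have htrans : ∀ a' ∈ level C v, ∀ x ∈ E, x + a' ∈ level C (T + 1) := by
    intro a' ha' x hx
    rw [← hlev] at hx
    have := add_mem_level C hx ha'
    rwa [show T - (v - 1) + v = T + 1 by omega] at this
  have hEuniv : E ≠ univ := by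
    intro h
    have : f T = p := by simp only [hf]; rw [← hEdef, h, card_univ, ZMod.card]
    omega
  have hED : E ⊆ level C (T + 1) := level_mono C (by omega)
  have hdiff : #(level C (T + 1) \ E) ≤ 2 := by
    rw [card_sdiff_of_subset hED]
    change f (T + 1) - f T ≤ 2
    omega
  -- the new elements produced by translating `E` by `±a`
  have hnew : ∀ a' ∈ level C v, ({y ∈ E | y + a' ∉ E}).image (· + a') ⊆ level C (T + 1) \ E := by
    intro a' ha' z hz
    obtain ⟨y, hy, rfl⟩ := mem_image.1 hz
    rw [mem_filter] at hy
    exact mem_sdiff.2 ⟨htrans a' ha' y hy.1, hy.2⟩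
  have hnewcard : ∀ a', #(({y ∈ E | y + a' ∉ E}).image (· + a')) = defect E a' := fun a' =>
    card_image_of_injective _ (add_left_injective a')
  have hd2 : defect E a ≤ 2 := by
    rw [← hnewcard]; exact (card_le_card (hnew a hav)).trans hdiff
  have hd0 : defect E a ≠ 0 := by
    intro h0
    refine hEuniv (eq_univ_of_add_closed ⟨0, zero_mem_level C T⟩ ha fun x hx => ?_)
    by_contra hcon
    have := card_eq_zero.1 h0
    exact notMem_empty x (this ▸ mem_filter.2 ⟨hx, hcon⟩)
  have hd1 : defect E a = 1 := by
    by_contra hne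
    have hda : defect E a = 2 := by omega
    have hav' := neg_mem_level C hav
    have e2 := eq_of_subset_of_card_le (hnew (-a) hav') (by
      rw [hnewcard, defect_neg, hda]; exact hdiff)
    -- both `E + a` and `E - a` fill up `level (T + 1)`, which is then invariant under `a`
    have huniv : level C (T + 1) = univ := by
      refine eq_univ_of_add_closed ⟨0, zero_mem_level C _⟩ ha fun x hx => ?_
      by_cases hxE : x ∈ E
      · exact htrans a hav x hxE
      · have hx' : x ∈ level C (T + 1) \ E := mem_sdiff.2 ⟨hx, hxE⟩
        rw [← e2] at hx'
        obtain ⟨y, hy, rfl⟩ := mem_image.1 hx'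
        rw [mem_filter] at hy
        simpa using hED hy.1
    have : f (T + 1) = p := by simp only [hf]; rw [huniv, card_univ, ZMod.card]
    omega
  have hprog := symm_progression hp2 hEuniv ha hd1 (fun x hx => neg_mem_level C hx) hfT
  have himg : (Finset.Icc (-(T + 1 : ℤ)) (T + 1)).image (fun l : ℤ => (l : ZMod p) * a)
      = level C (T + 1) := by
    refine eq_of_subset_of_card_le ?_ ?_
    · intro z hz
      obtain ⟨l, hl, rfl⟩ := mem_image.1 hz
      rw [Finset.mem_Icc] at hl
      rcases lt_trichotomy l 0 with h | h | h
      · have := htrans (-a) (neg_mem_level C hav) _ (hprog (l + 1) (by omega) (by omega))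
        convert this using 1
        push_cast; ring
      · rw [h]; simpa using zero_mem_level C (T + 1)
      · have := htrans a hav _ (hprog (l - 1) (by omega) (by omega))
        convert this using 1
        push_cast; ring
    · rw [card_intCast_image ha (by omega)]
      change f (T + 1) ≤ _
      omega
  refine ⟨a, ha, fun l h1 h2 => hEC (hprog l h1 h2), fun x hx => ?_⟩
  have := hCD hx
  rw [← himg] at this
  obtain ⟨l, hl, rfl⟩ := mem_image.1 this
  rw [Finset.mem_Icc] at hl
  exact ⟨l, hl.1, hl.2, rfl⟩

/-- Up to dilation an extremal `C` of size `2T + 1` or `2T + 2` lies in `{-(#C - T - 1), …, T}`. -/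
lemma exists_dilation (C : Finset (ZMod p)) {T : ℕ} (hc1 : 2 * T + 1 ≤ #C)
    (hc2 : #C ≤ 2 * T + 2) (hp : #C + (T + 2) ≤ p)
    (hsum : ∑ x, (T + 1 - defect C x) = (T + 1) ^ 2)
    (hin : ∀ x ∈ C, defect C x ≤ T + 1) (hout : ∀ x ∉ C, T + 1 ≤ defect C x) :
    ∃ b : ZMod p, b ≠ 0 ∧ ∀ x ∈ C, ∃ l : ℤ, (T : ℤ) + 1 - #C ≤ l ∧ l ≤ T ∧ x = l * b := by
  rcases Nat.eq_zero_or_pos T with rfl | hT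
  · have h0 : (0 : ZMod p) ∈ C := by
      by_contra h
      have := hout 0 h
      rw [defect_zero] at this
      omega
    rcases Nat.lt_or_ge 1 #C with h | h
    · obtain ⟨y, hy, hy0⟩ := exists_mem_ne h (0 : ZMod p)
      have hC : ({0, y} : Finset (ZMod p)) = C :=
        eq_of_subset_of_card_le (by simp [insert_subset_iff, h0, hy])
          (by rw [card_pair hy0.symm]; omega)
      refine ⟨-y, neg_ne_zero.2 hy0, fun x hx => ?_⟩
      rw [← hC] at hx
      rcases mem_insert.1 hx with rfl | hx
      · exact ⟨0, by omega, by omega, by simp⟩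
      · exact ⟨-1, by omega, by omega, by simpa using mem_singleton.1 hx⟩
    · refine ⟨1, one_ne_zero, fun x hx => ⟨0, by omega, by omega, ?_⟩⟩
      simpa using card_le_one.1 h x hx 0 h0
  obtain ⟨a, ha, hsub, hsup⟩ := exists_difference C hT hc1 hc2 hp hsum hin hout
  -- `C` contains `{l a : |l| ≤ T}`, so it has room for `#C - (2T + 1)` further elements
  have hroom : ∀ u v : ℤ, v - u < p → (∀ l : ℤ, u ≤ l → l ≤ v → (l : ZMod p) * a ∈ C) →
      (v + 1 - u).toNat ≤ #C := by
    intro u v huv h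
    rw [← card_intCast_image ha huv]
    refine card_le_card fun z hz => ?_
    obtain ⟨l, hl, rfl⟩ := mem_image.1 hz
    rw [Finset.mem_Icc] at hl
    exact h l hl.1 hl.2
  by_cases hplus : (((T + 1 : ℤ)) : ZMod p) * a ∈ C
  · have hc : #C = 2 * T + 2 := by
      have := hroom (-T) (T + 1) (by omega) (fun l h1 h2 => by
        rcases h2.eq_or_lt with rfl | h2
        · exact hplus
        · exact hsub l h1 (by omega))
      omega
    have hminus : ((-(T + 1 : ℤ) : ℤ) : ZMod p) * a ∉ C := by
      intro hcon
      have := hroom (-(T + 1)) (T + 1) (by omega) (fun l h1 h2 => by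
        rcases h2.eq_or_lt with rfl | h2
        · exact hplus
        · rcases h1.eq_or_lt with rfl | h1
          · exact hcon
          · exact hsub l (by omega) (by omega))
      omega
    refine ⟨-a, neg_ne_zero.2 ha, fun x hx => ?_⟩
    obtain ⟨l, h1, h2, rfl⟩ := hsup x hx
    refine ⟨-l, by omega, ?_, by push_cast; ring⟩
    by_contra h
    rw [show l = -(T + 1 : ℤ) by omega] at hx
    exact hminus hx
  · refine ⟨a, ha, fun x hx => ?_⟩
    obtain ⟨l, h1, h2, rfl⟩ := hsup x hx
    have hlT : l ≤ T := by
      by_contra h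
      rw [show l = (T + 1 : ℤ) by omega] at hx
      exact hplus hx
    refine ⟨l, ?_, hlT, rfl⟩
    by_contra h
    have hl : l = -(T + 1 : ℤ) := by omega
    have := hroom (-(T + 1)) T (by omega) (fun l' h1 h2 => by
      rcases h1.eq_or_lt with h1 | h1
      · rw [← h1, ← hl]; exact hx
      · exact hsub l' (by omega) (by omega))
    omega

end Structure

/-! ### The middle interval -/

section Middle

variable {p : ℕ}

/-- The extremal value matches the complementary bound: with `c = p - m` and `h = ⌈c / 2⌉`,
`⌊(3m - p)² / 4⌋ = p² + 3c² - 3pc - (c(c - h) + h²)`. -/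
lemma value_identity {p m h : ℕ} (h2 : m ≤ p) (h3 : p + 2 ≤ 3 * m)
    (hh : 2 * h = p - m ∨ 2 * h = p - m + 1) :
    (3 * m - p) ^ 2 / 4 + ((p - m) * (p - m - h) + h ^ 2) + 3 * p * (p - m)
      = p ^ 2 + 3 * (p - m) ^ 2 := by
  obtain ⟨K, rfl⟩ : ∃ K, m = h + K := ⟨m - h, by omega⟩
  rcases hh with hh | hh
  · obtain rfl : p = K + 3 * h := by omega
    rw [show 3 * (h + K) - (K + 3 * h) = 2 * K by omega,
      show K + 3 * h - (h + K) = 2 * h by omega, show 2 * h - h = h by omega,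
      show (2 * K) ^ 2 / 4 = K ^ 2 by rw [mul_pow]; omega]
    ring
  · obtain ⟨g, rfl⟩ : ∃ g, h = g + 1 := ⟨h - 1, by omega⟩
    obtain rfl : p = K + 3 * g + 2 := by omega
    rw [show 3 * (g + 1 + K) - (K + 3 * g + 2) = 2 * K + 1 by omega,
      show K + 3 * g + 2 - (g + 1 + K) = 2 * g + 1 by omega,
      show 2 * g + 1 - (g + 1) = g by omega,
      show (2 * K + 1) ^ 2 / 4 = K ^ 2 + K by
        rw [show (2 * K + 1) ^ 2 = 4 * (K ^ 2 + K) + 1 by ring]; omega]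
    ring

lemma sum_truncated_le (K : ℕ) : ∀ n, 2 * ∑ i ∈ range n, (K - i) ≤ K * (K + 1) := by
  induction K with
  | zero => intro n; simp
  | succ K ih =>
    intro n
    rcases n with _ | n
    · simp
    · rw [sum_range_succ']
      have := ih n
      simp only [Nat.add_sub_add_right, Nat.sub_zero]
      nlinarith

variable [Fact p.Prime]

lemma card_Apm {m : ℕ} (h2 : m ≤ p) : #(Apm p m) = m := by
  unfold Apm
  rw [card_image_of_injOn, card_range]
  intro i hi j hj hij
  simp only [coe_range, Set.mem_Iio] at hi hj
  have hij' := add_left_cancel hij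
  rwa [ZMod.natCast_eq_natCast_iff', Nat.mod_eq_of_lt (by omega),
    Nat.mod_eq_of_lt (by omega)] at hij'

lemma pairCount_Apm_le {m : ℕ} (h2 : m ≤ p) (h3 : p + 2 ≤ 3 * m) :
    pairCount (Apm p m) ≤ (3 * m - p) ^ 2 / 4 := by
  set h := cdiv (p - m) 2 with hdef
  have hh : 2 * h = p - m ∨ 2 * h = p - m + 1 := by
    rw [hdef]; unfold cdiv; omega
  -- in terms of the indices, `a₁ + a₂ ∈ A` means that `i + j` is small or large
  have hcount : pairCount (Apm p m) ≤
      #{x ∈ range m ×ˢ range m | x.1 + x.2 + h < m ∨ p ≤ x.1 + x.2 + h} := by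
    refine le_trans (card_le_card ?_) (card_image_le (f := fun x : ℕ × ℕ =>
      (((h : ZMod p) + (x.1 : ZMod p)), ((h : ZMod p) + (x.2 : ZMod p)))))
    rintro ⟨x, y⟩ hxy
    rw [mem_filter, mem_product] at hxy
    obtain ⟨⟨hx, hy⟩, hs⟩ := hxy
    obtain ⟨i, hi, rfl⟩ := mem_image.1 hx
    obtain ⟨j, hj, rfl⟩ := mem_image.1 hy
    obtain ⟨k, hk, hkk⟩ := mem_image.1 hs
    rw [mem_range] at hi hj hk
    refine mem_image.2 ⟨(i, j), ?_, rfl⟩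
    rw [mem_filter, mem_product, mem_range, mem_range]
    refine ⟨⟨hi, hj⟩, ?_⟩
    have hdvd : (p : ℤ) ∣ (h + i + j - k : ℤ) := by
      rw [← ZMod.intCast_zmod_eq_zero_iff_dvd]
      push_cast
      linear_combination -hkk
    obtain ⟨q, hq⟩ := hdvd
    have hq0 : 0 ≤ q := by
      by_contra hcon
      have : (p : ℤ) * q ≤ p * (-1) := by gcongr; omega
      omega
    have hq1 : q ≤ 1 := by
      by_contra hcon
      have : (p : ℤ) * 2 ≤ p * q := by gcongr; omega
      omega
    obtain rfl | rfl : q = 0 ∨ q = 1 := by omega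
    · left; simp only; omega
    · right; simp only; omega
  have hrow : ∀ i ∈ range m, #{j ∈ range m | i + j + h < m ∨ p ≤ i + j + h}
      ≤ (m - h - i) + (m + h + i - p) := by
    intro i hi
    rw [mem_range] at hi
    rw [filter_or]
    refine (card_union_le _ _).trans (add_le_add ?_ ?_)
    · rw [← card_range (m - h - i)]
      refine card_le_card fun j hj => ?_
      simp only [mem_filter, mem_range] at hj ⊢
      omega
    · rw [show m + h + i - p = m - (p - h - i) by omega, ← Nat.card_Ico]
      refine card_le_card fun j hj => ?_
      simp only [mem_filter, mem_range, Finset.mem_Ico] at hj ⊢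
      omega
  have hsum : #{x ∈ range m ×ˢ range m | x.1 + x.2 + h < m ∨ p ≤ x.1 + x.2 + h}
      ≤ ∑ i ∈ range m, (m - h - i) + ∑ i ∈ range m, (2 * m + h - 1 - p - i) := by
    rw [← sum_range_reflect (fun i => 2 * m + h - 1 - p - i), ← sum_add_distrib,
      card_filter, sum_product]
    refine sum_le_sum fun i hi => ?_
    rw [← card_filter]
    refine (hrow i hi).trans ?_
    rw [mem_range] at hi
    omega
  have s1 := sum_truncated_le (m - h) m
  have s2 := sum_truncated_le (2 * m + h - 1 - p) m
  have hfin : (m - h) * (m - h + 1) + (2 * m + h - 1 - p) * (2 * m + h - 1 - p + 1)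
      = 2 * ((3 * m - p) ^ 2 / 4) := by
    rcases hh with hh | hh
    · obtain ⟨K, hK⟩ : ∃ K, m = h + K + 1 := ⟨m - h - 1, by omega⟩
      rw [show m - h = K + 1 by omega, show 2 * m + h - 1 - p = K by omega,
        show 3 * m - p = 2 * (K + 1) by omega,
        show (2 * (K + 1)) ^ 2 / 4 = (K + 1) ^ 2 by rw [mul_pow]; omega]
      ring
    · obtain ⟨K, hK⟩ : ∃ K, m = h + K := ⟨m - h, by omega⟩
      rw [show m - h = K by omega, show 2 * m + h - 1 - p = K by omega,
        show 3 * m - p = 2 * K + 1 by omega,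
        show (2 * K + 1) ^ 2 / 4 = K ^ 2 + K by
          rw [show (2 * K + 1) ^ 2 = 4 * (K ^ 2 + K) + 1 by ring]; omega]
      ring
  omega

/-- If the complement of `A` lies in the dilate by `b` of the short interval around `0`, then `A`
is the dilate by `b` of the middle interval. -/
lemma eq_dilate_Apm {m : ℕ} (h2 : m ≤ p) {A : Finset (ZMod p)} (hA : #A = m) {b : ZMod p}
    (hb : b ≠ 0)
    (hC : ∀ x ∈ Aᶜ, ∃ l : ℤ, (cdiv (p - m) 2 : ℤ) - (p - m : ℕ) ≤ l ∧ l ≤ cdiv (p - m) 2 - 1 ∧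
      x = l * b) :
    A = (Apm p m).image (fun s => b * s) := by
  symm
  refine eq_of_subset_of_card_le ?_ ?_
  · intro z hz
    obtain ⟨s, hs, rfl⟩ := mem_image.1 hz
    obtain ⟨i, hi, rfl⟩ := mem_image.1 hs
    rw [mem_range] at hi
    by_contra hcon
    obtain ⟨l, hl1, hl2, hl⟩ := hC _ (mem_compl.2 hcon)
    have := intCast_mul_inj hb (l := (cdiv (p - m) 2 : ℤ) + i) (l' := l)
      (abs_lt.2 ⟨by omega, by omega⟩) (by rw [← hl]; push_cast; ring)
    omega
  · rw [card_image_of_injective _ (mul_right_injective₀ hb), card_Apm h2, hA]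

end Middle

theorem stmt19 (p m : ℕ) (hp : p.Prime) (h1 : cdiv (p - 1) 3 + 1 ≤ m) (h2 : m ≤ p) :
    IsLeast {c : ℕ | ∃ A : Finset (ZMod p), A.card = m ∧ c = pairCount A}
        ((3 * m - p) ^ 2 / 4) ∧
      ∀ A : Finset (ZMod p), A.card = m → pairCount A = (3 * m - p) ^ 2 / 4 →
        ∃ b : ZMod p, A = (Apm p m).image (fun s => b * s) := by
  have : Fact p.Prime := ⟨hp⟩
  have h3 : p + 2 ≤ 3 * m := by
    unfold cdiv at h1
    have := hp.two_le
    omega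
  set h := cdiv (p - m) 2 with hdef
  have hh : 2 * h = p - m ∨ 2 * h = p - m + 1 := by
    rw [hdef]; unfold cdiv; omega
  have hval := value_identity h2 h3 hh
  have hcompl : ∀ A : Finset (ZMod p), #A = m → #Aᶜ = p - m := fun A hA => by
    rw [card_compl, ZMod.card, hA]
  have hlower : ∀ A : Finset (ZMod p), #A = m → (3 * m - p) ^ 2 / 4 ≤ pairCount A := by
    intro A hA
    have hc := hcompl A hA
    have hbd := (pairCount_le Aᶜ (j := h) (by omega) (by omega)).1
    have hid := pairCount_compl Aᶜ
    rw [compl_compl, hc] at hid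
    rw [hc] at hbd
    omega
  refine ⟨⟨⟨Apm p m, card_Apm h2, ?_⟩, ?_⟩, ?_⟩
  · exact le_antisymm (hlower _ (card_Apm h2)) (pairCount_Apm_le h2 h3)
  · rintro c ⟨A, hA, rfl⟩
    exact hlower A hA
  intro A hA heq
  have hc := hcompl A hA
  rcases Nat.eq_zero_or_pos (p - m) with h0 | h0
  · refine ⟨1, eq_dilate_Apm h2 hA one_ne_zero fun x hx => ?_⟩
    rw [card_eq_zero.1 (hc.trans h0)] at hx
    exact absurd hx (notMem_empty x)
  obtain ⟨T, hT⟩ : ∃ T, h = T + 1 := ⟨h - 1, by omega⟩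
  have hid := pairCount_compl Aᶜ
  rw [compl_compl, hc] at hid
  obtain ⟨hs, hin, hout⟩ := (pairCount_le Aᶜ (j := T + 1) (by omega) (by omega)).2 (by
    rw [hc, ← hT]; omega)
  obtain ⟨b, hb, hC⟩ := exists_dilation Aᶜ (by omega) (by omega) (by omega) hs hin hout
  refine ⟨b, eq_dilate_Apm h2 hA hb fun x hx => ?_⟩
  obtain ⟨l, hl1, hl2, hl⟩ := hC x hx
  exact ⟨l, by omega, by omega, hl⟩
end
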